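/- Let g be a natural number and let a_i, b_i (i = 1, …, g) be integers with E := (∏_{i=1}^g a_i)·∏_{1 ≤ r < s ≤ g}(a_r b_s − a_s b_r) ≠ 0. For each prime p let ρ(p) be the number of residues n mod p with ∏_{i=1}^g (a_i n + b_i) ≡ 0 (mod p), and suppose ρ(p) < p for all primes p. Then there is a constant C depending only on g such that for all real numbers y, z with 1 < y ≤ z: #{n ∈ ℤ : z − y < n ≤ z, a_i n + b_i is prime for all i = 1, …, g} ≤ 2^g · g! · ∏_p (1 − (ρ(p) − 1)/(p − 1))·(1 − 1/p)^{−g+1} · (y/(log y)^g) · (1 + C·(log log 3y + log log 3|E|)/log y). -/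

import Mathlib

open Real Finset

section
attribute [local instance] Classical.propDecidable

/-- The quantity `E = (∏ i, a i) · ∏_{r < s} (a_r b_s − a_s b_r)`. -/
def sieveE {g : ℕ} (a b : Fin g → ℤ) : ℤ :=
  (∏ i, a i) *
    ∏ r : Fin g, ∏ s ∈ Finset.univ.filter (fun s => r < s), (a r * b s - a s * b r)

/-- `sieveRho a b p` is the number of residues `n` mod `p` with
`∏ i, (a i * n + b i) ≡ 0 (mod p)`. -/
noncomputable def sieveRho {g : ℕ} (a b : Fin g → ℤ) (p : ℕ) : ℕ :=
  Nat.card {n : ZMod p | ∏ i, ((a i : ZMod p) * n + (b i : ZMod p)) = 0}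
end

lemma rho_one {g : ℕ} (a b : Fin g → ℤ) : sieveRho a b 1 = 1 := by
  unfold sieveRho
  have : {n : ZMod 1 | ∏ i, ((a i : ZMod 1) * n + (b i : ZMod 1)) = 0} = Set.univ := by
    ext x; simp only [Set.mem_ofPred_eq, Set.mem_univ, iff_true]; exact Subsingleton.elim _ _
  rw [this]
  simp

lemma rho_mul {g : ℕ} (a b : Fin g → ℤ) {m n : ℕ} (h : m.Coprime n) :
    sieveRho a b (m * n) = sieveRho a b m * sieveRho a b n := by
  unfold sieveRho
  rw [← Nat.card_prod]
  refine Nat.card_congr ?_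
  let e := ZMod.chineseRemainder h
  have key : ∀ x : ZMod (m*n), (∏ i, ((a i : ZMod (m*n)) * x + (b i : ZMod (m*n))) = 0) ↔
      (∏ i, ((a i : ZMod m) * (e x).1 + (b i : ZMod m)) = 0 ∧
       ∏ i, ((a i : ZMod n) * (e x).2 + (b i : ZMod n)) = 0) := by
    intro x
    rw [← e.map_eq_zero_iff, map_prod]
    rw [Prod.ext_iff, Prod.fst_prod, Prod.snd_prod]
    simp
  refine (Equiv.subtypeEquivRight (q := fun x => ∏ i, ((a i : ZMod (m*n)) * x + (b i : ZMod (m*n))) = 0) (by simp)).trans ?_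
  refine (e.toEquiv.subtypeEquiv (p := fun x => ∏ i, ((a i : ZMod (m*n)) * x + (b i : ZMod (m*n))) = 0) (q := fun x : ZMod m × ZMod n => ∏ i, ((a i : ZMod m) * x.1 + (b i : ZMod m)) = 0 ∧
       ∏ i, ((a i : ZMod n) * x.2 + (b i : ZMod n)) = 0) (fun x => key x)).trans ?_
  refine (Equiv.subtypeProdEquivProd (p := fun x : ZMod m => ∏ i, ((a i : ZMod m) * x + (b i : ZMod m)) = 0)
    (q := fun x : ZMod n => ∏ i, ((a i : ZMod n) * x + (b i : ZMod n)) = 0)).trans ?_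
  exact Equiv.prodCongr (Equiv.subtypeEquivRight (by simp)) (Equiv.subtypeEquivRight (by simp))

lemma rho_le {g : ℕ} (a b : Fin g → ℤ) {p : ℕ} (hp : p.Prime) (h : sieveRho a b p < p) :
    sieveRho a b p ≤ g := by
  classical
  have := Fact.mk hp
  have h1 : ∀ i, ¬ ((a i : ZMod p) = 0 ∧ (b i : ZMod p) = 0) := by
    intro i hi
    have : {n : ZMod p | ∏ i, ((a i : ZMod p) * n + (b i : ZMod p)) = 0} = Set.univ := by
      ext x
      simp only [Set.mem_ofPred_eq, Set.mem_univ, iff_true]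
      exact Finset.prod_eq_zero (Finset.mem_univ i) (by simp [hi.1, hi.2])
    unfold sieveRho at h
    rw [this] at h
    simp at h
  have h2 : {n : ZMod p | ∏ i, ((a i : ZMod p) * n + (b i : ZMod p)) = 0} ⊆
      ((Finset.univ.image (fun i : Fin g => -(b i : ZMod p) / (a i : ZMod p)) : Finset (ZMod p)) : Set (ZMod p)) := by
    intro x hx
    simp only [Set.mem_ofPred_eq, Finset.prod_eq_zero_iff] at hx
    obtain ⟨i, -, hi⟩ := hx
    simp only [Finset.coe_image, Finset.coe_univ, Set.image_univ, Set.mem_range]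
    refine ⟨i, ?_⟩
    have ha : (a i : ZMod p) ≠ 0 := by
      intro ha
      apply h1 i ⟨ha, ?_⟩
      simpa [ha] using hi
    rw [div_eq_iff ha]
    linear_combination -hi
  unfold sieveRho
  rw [Nat.card_coe_set_eq]
  calc _ ≤ _ := Set.ncard_le_ncard h2 (Finset.finite_toSet _)
    _ = _ := Set.ncard_coe_finset _
    _ ≤ _ := Finset.card_image_le
    _ = g := by simp

lemma rho_eq {g : ℕ} (a b : Fin g → ℤ) {p : ℕ} (hp : p.Prime) (h : sieveRho a b p < p)
    (hE : ¬ (p : ℤ) ∣ sieveE a b) :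
    sieveRho a b p = g := by
  classical
  have := Fact.mk hp
  refine le_antisymm (rho_le a b hp h) ?_
  have hE' : ((sieveE a b : ℤ) : ZMod p) ≠ 0 := by
    rwa [Ne, ZMod.intCast_zmod_eq_zero_iff_dvd]
  unfold sieveE at hE'
  push_cast at hE'
  rw [mul_ne_zero_iff, Finset.prod_ne_zero_iff, Finset.prod_ne_zero_iff] at hE'
  obtain ⟨h1, h2⟩ := hE'
  have h3 : ∀ r s : Fin g, r < s → (a r : ZMod p) * b s - a s * b r ≠ 0 := by
    intro r s hrs
    have := h2 r (Finset.mem_univ _)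
    rw [Finset.prod_ne_zero_iff] at this
    exact this s (by simp [hrs])
  have inj : Function.Injective (fun i : Fin g => -(b i : ZMod p) / (a i : ZMod p)) := by
    intro r s hrs
    simp only at hrs
    have hr := h1 r (Finset.mem_univ _)
    have hs := h1 s (Finset.mem_univ _)
    rw [div_eq_div_iff hr hs] at hrs
    by_contra hne
    rcases lt_or_gt_of_ne hne with hlt | hlt
    · exact h3 r s hlt (by linear_combination hrs)
    · exact h3 s r hlt (by linear_combination -hrs)
  unfold sieveRho
  rw [Nat.card_coe_set_eq]
  calc g = (Finset.univ.image (fun i : Fin g => -(b i : ZMod p) / (a i : ZMod p)) : Finset (ZMod p)).card := by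
        rw [Finset.card_image_of_injective _ inj]; simp
    _ = _ := (Set.ncard_coe_finset _).symm
    _ ≤ _ := by
      apply Set.ncard_le_ncard _ (Set.toFinite _)
      intro x hx
      simp only [Finset.coe_image, Finset.coe_univ, Set.image_univ, Set.mem_range] at hx
      obtain ⟨i, rfl⟩ := hx
      simp only [Set.mem_ofPred_eq]
      apply Finset.prod_eq_zero (Finset.mem_univ i)
      have hr := h1 i (Finset.mem_univ _)
      field_simp
      ring

lemma count_class (y z : ℝ) (hy : 0 ≤ y) (d : ℕ) (hd : 0 < d) (v : ℤ) :
    |((#{n ∈ Finset.Ioc ⌊z - y⌋ ⌊z⌋ | n ≡ v [ZMOD d]} : ℕ) : ℝ) - y / d| ≤ 1 := by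
  have hd' : (0:ℤ) < d := by exact_mod_cast hd
  have hdr : (0:ℝ) < d := by exact_mod_cast hd
  have hdq : (0:ℚ) < d := by exact_mod_cast hd
  have fl : ∀ x : ℝ, ⌊((⌊x⌋ : ℚ) - (v:ℚ)) / ((d : ℤ) : ℚ)⌋ = ⌊(x - v) / d⌋ := by
    intro x
    apply eq_of_forall_le_iff
    intro m
    rw [Int.le_floor, Int.le_floor, Int.cast_natCast, le_div_iff₀ hdq, le_div_iff₀ hdr,
      le_sub_iff_add_le, le_sub_iff_add_le]
    have : ((m:ℝ) * d + v ≤ x) ↔ (m * d + v : ℤ) ≤ ⌊x⌋ := by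
      rw [Int.le_floor]; push_cast; rfl
    rw [this]
    exact_mod_cast Iff.rfl
  have h := Int.Ioc_filter_modEq_card ⌊z - y⌋ ⌊z⌋ hd' v
  rw [fl, fl] at h
  have hle : ⌊(z - y - v) / d⌋ ≤ ⌊(z - v) / d⌋ := by
    apply Int.floor_le_floor
    gcongr
    linarith
  rw [max_eq_left (by omega)] at h
  have h' : ((#{n ∈ Finset.Ioc ⌊z - y⌋ ⌊z⌋ | n ≡ v [ZMOD d]} : ℕ) : ℝ) = ((⌊(z - v) / d⌋ - ⌊(z - y - v) / d⌋ : ℤ) : ℝ) := by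
    exact_mod_cast congrArg (Int.cast : ℤ → ℝ) h
  rw [h']
  push_cast
  have e : y / d = (z - v) / d - (z - y - v) / d := by ring
  rw [e, abs_le]
  have a1 := Int.floor_le ((z - v) / (d:ℝ))
  have a2 := Int.lt_floor_add_one ((z - v) / (d:ℝ))
  have a3 := Int.floor_le ((z - y - v) / (d:ℝ))
  have a4 := Int.lt_floor_add_one ((z - y - v) / (d:ℝ))
  constructor <;> linarith

lemma count_dvd {g : ℕ} (a b : Fin g → ℤ) (y z : ℝ) (hy : 0 ≤ y) (d : ℕ) (hd : 0 < d) :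
    |((#{n ∈ Finset.Ioc ⌊z - y⌋ ⌊z⌋ | (d : ℤ) ∣ ∏ i, (a i * n + b i)} : ℕ) : ℝ)
      - sieveRho a b d / d * y| ≤ sieveRho a b d := by
  classical
  haveI : NeZero d := ⟨hd.ne'⟩
  set S : Finset (ZMod d) := {n : ZMod d | ∏ i, ((a i : ZMod d) * n + (b i : ZMod d)) = 0} with hS
  have hcard : sieveRho a b d = #S := by
    unfold sieveRho
    rw [Nat.card_coe_set_eq, ← Set.ncard_coe_finset]
    congr 1
    ext x; simp [hS]
  have h1 : #{n ∈ Finset.Ioc ⌊z - y⌋ ⌊z⌋ | (d : ℤ) ∣ ∏ i, (a i * n + b i)} =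
      ∑ r ∈ S, #{n ∈ Finset.Ioc ⌊z - y⌋ ⌊z⌋ | n ≡ (r.val : ℤ) [ZMOD d]} := by
    rw [Finset.card_eq_sum_card_fiberwise (f := fun n : ℤ => (n : ZMod d)) (t := S)]
    · apply Finset.sum_congr rfl
      intro r hr
      congr 1
      ext n
      simp only [Finset.mem_filter]
      have e1 : (n ≡ (r.val : ℤ) [ZMOD d]) ↔ (n : ZMod d) = r := by
        rw [← ZMod.intCast_eq_intCast_iff]
        simp
      rw [e1]
      constructor
      · rintro ⟨⟨h, _⟩, h'⟩; exact ⟨h, h'⟩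
      · rintro ⟨h, h'⟩
        refine ⟨⟨h, ?_⟩, h'⟩
        rw [← ZMod.intCast_zmod_eq_zero_iff_dvd]
        subst h'
        push_cast
        simpa [hS] using hr
    · intro n hn
      simp only [Finset.coe_filter, Set.mem_ofPred_eq] at hn
      have := hn.2
      rw [← ZMod.intCast_zmod_eq_zero_iff_dvd] at this
      push_cast at this
      simpa [hS] using this
  rw [h1, hcard]
  push_cast
  have : (#S : ℝ) / d * y = ∑ r ∈ S, y / d := by
    rw [Finset.sum_const, nsmul_eq_mul]; ring
  rw [this, ← Finset.sum_sub_distrib]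
  calc _ ≤ ∑ r ∈ S, |((#{n ∈ Finset.Ioc ⌊z - y⌋ ⌊z⌋ | n ≡ (r.val : ℤ) [ZMOD d]} : ℕ) : ℝ) - y / d| :=
        Finset.abs_sum_le_sum_abs _ _
    _ ≤ ∑ r ∈ S, 1 := Finset.sum_le_sum (fun r _ => count_class y z hy d hd _)
    _ = _ := by simp

namespace SelbergAux
open BoundingSieve ArithmeticFunction
open scoped ArithmeticFunction.Moebius

variable (s : BoundingSieve) (D : ℕ)

/-- The Selberg denominator. -/
noncomputable def GG : ℝ := ∑ l ∈ s.prodPrimes.divisors with l ≤ D, s.selbergTerms l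

/-- The diagonalised variables. -/
noncomputable def yy (l : ℕ) : ℝ := if l ≤ D then (μ l : ℝ) * s.selbergTerms l / GG s D else 0

/-- The Selberg weights. -/
noncomputable def ww (d : ℕ) : ℝ :=
  (s.nu d)⁻¹ * ∑ m ∈ s.prodPrimes.divisors with d ∣ m, (μ (m / d) : ℝ) * yy s D m

variable {s D}

lemma GG_pos (hD : 1 ≤ D) : 0 < GG s D := by
  unfold GG
  apply Finset.sum_pos
  · intro l hl
    simp only [Finset.mem_filter, Nat.mem_divisors] at hl
    exact selbergTerms_pos hl.1.1
  · exact ⟨1, by simp [hD, prodPrimes_ne_zero]⟩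

lemma moebius_inner {l m P : ℕ} (hP : P ≠ 0) (hm : m ∣ P) :
    (∑ d ∈ P.divisors with l ∣ d ∧ d ∣ m, (μ (m / d) : ℝ)) = if l = m then 1 else 0 := by
  by_cases hlm : l ∣ m
  · have hm0 : m ≠ 0 := ne_zero_of_dvd_ne_zero hP hm
    have hl0 : l ≠ 0 := ne_zero_of_dvd_ne_zero hm0 hlm
    obtain ⟨c, rfl⟩ := hlm
    have hc0 : c ≠ 0 := by rintro rfl; simp at hm0
    have h1 : (∑ d ∈ P.divisors with l ∣ d ∧ d ∣ l * c, (μ (l * c / d) : ℝ)) =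
        ∑ e ∈ c.divisors, (μ (c / e) : ℝ) := by
      symm
      apply Finset.sum_bij (fun e _ => l * e)
      · intro e he
        simp only [Nat.mem_divisors] at he
        simp only [Finset.mem_filter, Nat.mem_divisors]
        exact ⟨⟨(Nat.mul_dvd_mul_left l he.1).trans hm, hP⟩, Dvd.intro _ rfl, Nat.mul_dvd_mul_left l he.1⟩
      · intro e1 _ e2 _ h
        exact Nat.eq_of_mul_eq_mul_left (Nat.pos_of_ne_zero hl0) h
      · intro d hd
        simp only [Finset.mem_filter, Nat.mem_divisors] at hd
        obtain ⟨-, ⟨e, rfl⟩, h⟩ := hd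
        refine ⟨e, ?_, rfl⟩
        rw [Nat.mem_divisors]
        exact ⟨Nat.dvd_of_mul_dvd_mul_left (Nat.pos_of_ne_zero hl0) h, hc0⟩
      · intro e he
        rw [Nat.mul_div_mul_left _ _ (Nat.pos_of_ne_zero hl0)]
    rw [h1, Nat.sum_div_divisors c (fun e => (μ e : ℝ))]
    have h2 : (∑ e ∈ c.divisors, μ e : ℤ) = if c = 1 then 1 else 0 := by
      rw [← ArithmeticFunction.coe_mul_zeta_apply, ArithmeticFunction.moebius_mul_coe_zeta,
        ArithmeticFunction.one_apply]
    have h3 : (∑ e ∈ c.divisors, (μ e : ℝ)) = ((∑ e ∈ c.divisors, μ e : ℤ) : ℝ) := by push_cast; rfl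
    rw [h3, h2]
    have : (l = l * c) ↔ c = 1 := by
      constructor
      · intro h
        have : l * 1 = l * c := by omega
        exact (Nat.eq_of_mul_eq_mul_left (Nat.pos_of_ne_zero hl0) this).symm
      · rintro rfl; simp
    simp only [this]
    split_ifs <;> simp
  · rw [if_neg (by rintro rfl; exact hlm dvd_rfl)]
    apply Finset.sum_eq_zero
    intro d hd
    simp only [Finset.mem_filter] at hd
    exact absurd (hd.2.1.trans hd.2.2) hlm

lemma ww_sum {l : ℕ} (hl : l ∣ s.prodPrimes) :
    (∑ d ∈ s.prodPrimes.divisors, if l ∣ d then s.nu d * ww s D d else 0) = yy s D l := by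
  have hP : s.prodPrimes ≠ 0 := prodPrimes_ne_zero
  calc _ = ∑ d ∈ s.prodPrimes.divisors, ∑ m ∈ s.prodPrimes.divisors,
        if l ∣ d ∧ d ∣ m then (μ (m / d) : ℝ) * yy s D m else 0 := by
        apply Finset.sum_congr rfl
        intro d hd
        split_ifs with h
        · unfold ww
          rw [mul_inv_cancel_left₀ (nu_ne_zero (Nat.dvd_of_mem_divisors hd)), Finset.sum_filter]
          simp [h]
        · simp [h]
    _ = ∑ m ∈ s.prodPrimes.divisors, (∑ d ∈ s.prodPrimes.divisors with l ∣ d ∧ d ∣ m, (μ (m / d) : ℝ)) * yy s D m := by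
        rw [Finset.sum_comm]
        apply Finset.sum_congr rfl
        intro m _
        rw [Finset.sum_mul, Finset.sum_filter]
    _ = ∑ m ∈ s.prodPrimes.divisors, if l = m then yy s D m else 0 := by
        apply Finset.sum_congr rfl
        intro m hm
        rw [moebius_inner hP (Nat.dvd_of_mem_divisors hm)]
        split_ifs <;> simp
    _ = _ := by
        rw [Finset.sum_ite_eq]
        simp [hl, hP]

lemma moebius_sq_of_squarefree {l : ℕ} (h : Squarefree l) : (μ l : ℝ) ^ 2 = 1 := by
  have := ArithmeticFunction.moebius_sq_eq_one_of_squarefree h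
  exact_mod_cast congrArg (Int.cast : ℤ → ℝ) this

lemma main_eq (hD : 1 ≤ D) : s.mainSum (lambdaSquared (ww s D)) = (GG s D)⁻¹ := by
  rw [mainSum_lambdaSquared_eq_sum_mul_sum_sq]
  calc _ = ∑ l ∈ s.prodPrimes.divisors, if l ≤ D then s.selbergTerms l / GG s D ^ 2 else 0 := by
        apply Finset.sum_congr rfl
        intro l hl
        have hl' := Nat.dvd_of_mem_divisors hl
        rw [ww_sum hl']
        unfold yy
        split_ifs
        · have h1 := (selbergTerms_pos hl').ne'
          rw [div_pow, mul_pow, moebius_sq_of_squarefree (squarefree_of_dvd_prodPrimes hl')]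
          field_simp
        · simp
    _ = GG s D / GG s D ^ 2 := by
        rw [← Finset.sum_filter, ← Finset.sum_div]; rfl
    _ = _ := by
        have := (GG_pos (s := s) hD).ne'
        field_simp

lemma ww_one (hD : 1 ≤ D) : ww s D 1 = 1 := by
  unfold ww
  rw [s.nu_mult.map_one]
  have : ∀ m ∈ s.prodPrimes.divisors, (μ (m / 1) : ℝ) * yy s D m =
      if m ≤ D then s.selbergTerms m / GG s D else 0 := by
    intro m hm
    unfold yy
    split_ifs
    · rw [Nat.div_one]
      have := moebius_sq_of_squarefree (squarefree_of_dvd_prodPrimes (s := s) (Nat.dvd_of_mem_divisors hm))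
      calc _ = (μ m : ℝ)^2 * (s.selbergTerms m / GG s D) := by ring
        _ = _ := by rw [this, one_mul]
    · simp
  rw [Finset.filter_true_of_mem (by simp), Finset.sum_congr rfl this, ← Finset.sum_filter, ← Finset.sum_div]
  simp only [inv_one, one_mul]
  exact div_self (GG_pos hD).ne'

lemma ww_eq_zero {d : ℕ} (hd : D < d) : ww s D d = 0 := by
  unfold ww
  rw [Finset.sum_eq_zero, mul_zero]
  intro m hm
  simp only [Finset.mem_filter, Nat.mem_divisors] at hm
  have : d ≤ m := Nat.le_of_dvd (Nat.pos_of_ne_zero (ne_zero_of_dvd_ne_zero hm.1.2 hm.1.1)) hm.2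
  unfold yy
  rw [if_neg (by omega), mul_zero]

lemma sum_mult_le {d : ℕ} (hd : d ∣ s.prodPrimes) (hd0 : 1 ≤ d) :
    (∑ m ∈ s.prodPrimes.divisors with d ∣ m ∧ m ≤ D, s.selbergTerms m) ≤
      s.selbergTerms d * GG s D := by
  have hP : s.prodPrimes ≠ 0 := prodPrimes_ne_zero
  unfold GG
  rw [Finset.mul_sum]
  have h1 : (∑ m ∈ s.prodPrimes.divisors with d ∣ m ∧ m ≤ D, s.selbergTerms m) =
      ∑ m ∈ s.prodPrimes.divisors with d ∣ m ∧ m ≤ D, s.selbergTerms d * s.selbergTerms (m / d) := by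
    apply Finset.sum_congr rfl
    intro m hm
    simp only [Finset.mem_filter, Nat.mem_divisors] at hm
    obtain ⟨⟨hmP, -⟩, ⟨c, rfl⟩, -⟩ := hm
    rw [Nat.mul_div_cancel_left _ hd0]
    have hsq := squarefree_of_dvd_prodPrimes hmP
    exact selbergTerms_isMultiplicative.map_mul_of_coprime (Nat.coprime_of_squarefree_mul hsq)
  rw [h1]
  rw [← Finset.sum_image (s := s.prodPrimes.divisors.filter (fun m => d ∣ m ∧ m ≤ D)) (g := fun m => m / d)
    (f := fun c => s.selbergTerms d * s.selbergTerms c)]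
  · apply Finset.sum_le_sum_of_subset_of_nonneg
    · intro c hc
      simp only [Finset.mem_image, Finset.mem_filter, Nat.mem_divisors] at hc
      obtain ⟨m, ⟨⟨hmP, -⟩, ⟨c', rfl⟩, hle⟩, rfl⟩ := hc
      rw [Nat.mul_div_cancel_left _ hd0]
      simp only [Finset.mem_filter, Nat.mem_divisors]
      exact ⟨⟨(Dvd.intro_left _ rfl).trans hmP, hP⟩, le_trans (Nat.le_mul_of_pos_left _ hd0) hle⟩
    · intro c hc _
      simp only [Finset.mem_filter, Nat.mem_divisors] at hc
      exact mul_nonneg (selbergTerms_pos hd).le (selbergTerms_pos hc.1.1).le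
  · intro m hm m' hm' h
    simp only [Finset.coe_filter, Set.mem_ofPred_eq] at hm hm'
    simp only at h
    rw [← Nat.mul_div_cancel' hm.2.1, ← Nat.mul_div_cancel' hm'.2.1, h]

lemma abs_ww_le (hD : 1 ≤ D) {d : ℕ} (hd : d ∣ s.prodPrimes) :
    |ww s D d| ≤ ∏ p ∈ d.primeFactors, (1 - s.nu p)⁻¹ := by
  have hP : s.prodPrimes ≠ 0 := prodPrimes_ne_zero
  have hd0 : 1 ≤ d := Nat.pos_of_ne_zero (ne_zero_of_dvd_ne_zero hP hd)
  have hG := GG_pos (s := s) hD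
  have hnu := nu_pos_of_dvd_prodPrimes hd
  unfold ww
  rw [abs_mul, abs_of_pos (inv_pos.mpr hnu)]
  have h1 : |∑ m ∈ s.prodPrimes.divisors with d ∣ m, (μ (m / d) : ℝ) * yy s D m| ≤ s.selbergTerms d := by
    calc _ ≤ ∑ m ∈ s.prodPrimes.divisors with d ∣ m, |(μ (m / d) : ℝ) * yy s D m| :=
          Finset.abs_sum_le_sum_abs _ _
      _ ≤ ∑ m ∈ s.prodPrimes.divisors with d ∣ m, if m ≤ D then s.selbergTerms m / GG s D else 0 := by
          apply Finset.sum_le_sum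
          intro m hm
          simp only [Finset.mem_filter, Nat.mem_divisors] at hm
          have hs := selbergTerms_pos hm.1.1
          have a1 : |(μ (m/d) : ℝ)| ≤ 1 := by exact_mod_cast ArithmeticFunction.abs_moebius_le_one
          have a2 : |(μ m : ℝ)| ≤ 1 := by exact_mod_cast ArithmeticFunction.abs_moebius_le_one
          rw [abs_mul]
          refine (mul_le_of_le_one_left (abs_nonneg _) a1).trans ?_
          unfold yy
          split_ifs
          · rw [abs_div, abs_mul, abs_of_pos hs, abs_of_pos hG]
            gcongr
            exact mul_le_of_le_one_left hs.le a2
          · simp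
      _ = (∑ m ∈ s.prodPrimes.divisors with d ∣ m ∧ m ≤ D, s.selbergTerms m) / GG s D := by
          rw [← Finset.sum_filter, Finset.filter_filter, Finset.sum_div]
      _ ≤ s.selbergTerms d := by
          rw [div_le_iff₀ hG]
          exact sum_mult_le hd hd0
  calc _ ≤ (s.nu d)⁻¹ * s.selbergTerms d := by gcongr
    _ = _ := by
      rw [selbergTerms_apply, inv_mul_cancel_left₀ hnu.ne']

lemma err_le (r : ℕ → ℝ) (hr0 : ∀ d, 0 ≤ r d) (hrem : ∀ d, d ∣ s.prodPrimes → |s.rem d| ≤ r d)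
    (hlcm : ∀ d e, d ∣ s.prodPrimes → e ∣ s.prodPrimes → r (d.lcm e) ≤ r d * r e) :
    s.errSum (lambdaSquared (ww s D)) ≤
      (∑ d ∈ s.prodPrimes.divisors with d ≤ D, |ww s D d| * r d) ^ 2 := by
  have hP : s.prodPrimes ≠ 0 := prodPrimes_ne_zero
  set w := ww s D with hw
  have e1 : (∑ d ∈ s.prodPrimes.divisors with d ≤ D, |w d| * r d) = ∑ d ∈ s.prodPrimes.divisors, |w d| * r d := by
    rw [Finset.sum_filter]
    apply Finset.sum_congr rfl
    intro d _
    split_ifs with h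
    · rfl
    · rw [hw, ww_eq_zero (by omega)]; simp
  rw [e1, sq, Finset.sum_mul_sum]
  unfold errSum
  calc _ ≤ ∑ d ∈ s.prodPrimes.divisors, ∑ d1 ∈ s.prodPrimes.divisors, ∑ d2 ∈ s.prodPrimes.divisors,
        (if d = d1.lcm d2 then |w d1| * |w d2| * r d else 0) := by
        apply Finset.sum_le_sum
        intro d hd
        have hd' := Nat.dvd_of_mem_divisors hd
        have hsub : d.divisors ⊆ s.prodPrimes.divisors := Nat.divisors_subset_of_dvd hP hd'
        calc |lambdaSquared w d| * |s.rem d| ≤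
            (∑ d1 ∈ d.divisors, ∑ d2 ∈ d.divisors, if d = d1.lcm d2 then |w d1| * |w d2| else 0) * r d := by
              apply mul_le_mul _ (hrem d hd') (abs_nonneg _)
              · apply Finset.sum_nonneg; intro i _; apply Finset.sum_nonneg; intro j _
                split_ifs <;> positivity
              · unfold lambdaSquared
                refine (Finset.abs_sum_le_sum_abs _ _).trans (Finset.sum_le_sum fun i _ => ?_)
                refine (Finset.abs_sum_le_sum_abs _ _).trans (Finset.sum_le_sum fun j _ => ?_)
                split_ifs
                · rw [abs_mul]
                · simp
          _ = ∑ d1 ∈ d.divisors, ∑ d2 ∈ d.divisors, if d = d1.lcm d2 then |w d1| * |w d2| * r d else 0 := by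
              simp_rw [Finset.sum_mul, ite_mul, zero_mul]
          _ ≤ ∑ d1 ∈ s.prodPrimes.divisors, ∑ d2 ∈ d.divisors, if d = d1.lcm d2 then |w d1| * |w d2| * r d else 0 := by
              apply Finset.sum_le_sum_of_subset_of_nonneg hsub
              intro i _ _
              apply Finset.sum_nonneg; intro j _
              have := hr0 d
              split_ifs <;> positivity
          _ ≤ _ := by
              apply Finset.sum_le_sum; intro i _
              apply Finset.sum_le_sum_of_subset_of_nonneg hsub
              intro j _ _
              have := hr0 d
              split_ifs <;> positivity
    _ = ∑ d1 ∈ s.prodPrimes.divisors, ∑ d2 ∈ s.prodPrimes.divisors, |w d1| * |w d2| * r (d1.lcm d2) := by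
        rw [Finset.sum_comm]
        apply Finset.sum_congr rfl; intro i hi
        rw [Finset.sum_comm]
        apply Finset.sum_congr rfl; intro j hj
        rw [Finset.sum_ite_eq' ]
        rw [if_pos]
        rw [Nat.mem_divisors]
        exact ⟨Nat.lcm_dvd (Nat.dvd_of_mem_divisors hi) (Nat.dvd_of_mem_divisors hj), hP⟩
    _ ≤ _ := by
        apply Finset.sum_le_sum; intro i hi
        apply Finset.sum_le_sum; intro j hj
        have := hlcm i j (Nat.dvd_of_mem_divisors hi) (Nat.dvd_of_mem_divisors hj)
        calc _ ≤ |w i| * |w j| * (r i * r j) := by gcongr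
          _ = _ := by ring

/-- The Selberg upper bound. -/
theorem selberg_bound (hD : 1 ≤ D) (r : ℕ → ℝ) (hr0 : ∀ d, 0 ≤ r d)
    (hrem : ∀ d, d ∣ s.prodPrimes → |s.rem d| ≤ r d)
    (hlcm : ∀ d e, d ∣ s.prodPrimes → e ∣ s.prodPrimes → r (d.lcm e) ≤ r d * r e) :
    s.siftedSum ≤ s.totalMass / GG s D +
      (∑ d ∈ s.prodPrimes.divisors with d ≤ D, (∏ p ∈ d.primeFactors, (1 - s.nu p)⁻¹) * r d) ^ 2 := by
  have h := s.siftedSum_le_mainSum_errSum_of_upperMoebius _ (upperMoebius_lambdaSquared (ww s D) (ww_one hD))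
  rw [main_eq hD] at h
  refine h.trans ?_
  rw [div_eq_mul_inv]
  gcongr
  refine (err_le r hr0 hrem hlcm).trans ?_
  apply pow_le_pow_left₀
  · apply Finset.sum_nonneg; intro d _; exact mul_nonneg (abs_nonneg _) (hr0 d)
  · apply Finset.sum_le_sum; intro d hd
    simp only [Finset.mem_filter, Nat.mem_divisors] at hd
    exact mul_le_mul_of_nonneg_right (abs_ww_le hD hd.1.1) (hr0 d)

end SelbergAux

namespace SieveArith
open ArithmeticFunction

/-- The arithmetic function `1/n`. -/
noncomputable def ee : ArithmeticFunction ℝ := ⟨fun n => (n:ℝ)⁻¹, by simp⟩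

lemma ee_apply (n : ℕ) : ee n = (n:ℝ)⁻¹ := rfl

lemma ee_mult : ee.IsMultiplicative := by
  rw [ArithmeticFunction.IsMultiplicative.iff_ne_zero]
  refine ⟨by simp [ee_apply], ?_⟩
  intro m n _ _ _
  simp [ee_apply, mul_comm]

/-- `τ_g(n)/n`. -/
noncomputable def tt (g : ℕ) : ArithmeticFunction ℝ := ee ^ g

lemma tt_succ (g : ℕ) : tt (g + 1) = ee * tt g := by
  unfold tt; rw [pow_succ']

lemma tt_zero : tt 0 = 1 := by unfold tt; simp

lemma tt_mult (g : ℕ) : (tt g).IsMultiplicative := by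
  induction g with
  | zero => rw [tt_zero]; exact ArithmeticFunction.isMultiplicative_one
  | succ k ih => rw [tt_succ]; exact ee_mult.mul ih

lemma tt_nonneg (g n : ℕ) : 0 ≤ tt g n := by
  induction g generalizing n with
  | zero => rw [tt_zero, ArithmeticFunction.one_apply]; split_ifs <;> norm_num
  | succ k ih =>
    rw [tt_succ, ArithmeticFunction.mul_apply]
    apply Finset.sum_nonneg
    intro x _
    rw [ee_apply]
    have := ih x.2
    positivity

lemma mul_prime_pow (u v : ArithmeticFunction ℝ) {p : ℕ} (hp : p.Prime) (j : ℕ) :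
    (u * v) (p ^ j) = ∑ x ∈ Finset.HasAntidiagonal.antidiagonal j, u (p ^ x.1) * v (p ^ x.2) := by
  rw [ArithmeticFunction.mul_apply, Nat.sum_divisorsAntidiagonal (fun x y => u x * v y),
    Nat.sum_divisors_prime_pow hp, Finset.Nat.sum_antidiagonal_eq_sum_range_succ (fun x y => u (p^x) * v (p^y))]
  apply Finset.sum_congr rfl
  intro i hi
  rw [Nat.pow_div (by simpa [Nat.lt_succ_iff] using hi) hp.pos]

lemma conv_sum (u v : ArithmeticFunction ℝ) (φ : ℕ → ℝ) (M : ℕ) (hφ : ∀ n, M < n → φ n = 0) :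
    ∑ n ∈ Finset.Ioc 0 M, (u * v) n * φ n =
      ∑ a ∈ Finset.Ioc 0 M, u a * ∑ b ∈ Finset.Ioc 0 M, v b * φ (a * b) := by
  have h1 : ∑ a ∈ Finset.Ioc 0 M, u a * ∑ b ∈ Finset.Ioc 0 M, v b * φ (a * b) =
      ∑ x ∈ (Finset.Ioc 0 M ×ˢ Finset.Ioc 0 M) with x.1 * x.2 ≤ M, u x.1 * v x.2 * φ (x.1 * x.2) := by
    rw [Finset.sum_filter, Finset.sum_product]
    apply Finset.sum_congr rfl; intro a _
    rw [Finset.mul_sum]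
    apply Finset.sum_congr rfl; intro b _
    split_ifs with h
    · ring
    · rw [hφ _ (by simpa using h)]; ring
  rw [h1]
  simp_rw [ArithmeticFunction.mul_apply, Finset.sum_mul]
  rw [Finset.sum_sigma']
  apply Finset.sum_bij (fun x _ => x.2)
  · rintro ⟨n, x⟩ hx
    simp only [Finset.mem_sigma, Finset.mem_Ioc, Nat.mem_divisorsAntidiagonal] at hx
    obtain ⟨⟨h0, h1⟩, rfl, h2⟩ := hx
    have a1 := Nat.pos_of_mul_pos_right h0
    have a2 := Nat.pos_of_mul_pos_left h0
    simp only [Finset.mem_filter, Finset.mem_product, Finset.mem_Ioc]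
    refine ⟨⟨⟨by nlinarith, by nlinarith⟩, ⟨by nlinarith, by nlinarith⟩⟩, h1⟩
  · rintro ⟨n, x⟩ hx ⟨m, y⟩ hy h
    simp only [Finset.mem_sigma, Nat.mem_divisorsAntidiagonal] at hx hy
    simp only at h
    subst h
    obtain ⟨_, rfl, _⟩ := hx
    obtain ⟨_, rfl, _⟩ := hy
    rfl
  · rintro x hx
    simp only [Finset.mem_filter, Finset.mem_product, Finset.mem_Ioc] at hx
    refine ⟨⟨x.1 * x.2, x⟩, ?_, rfl⟩
    simp only [Finset.mem_sigma, Finset.mem_Ioc, Nat.mem_divisorsAntidiagonal]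
    have : 0 < x.1 * x.2 := Nat.mul_pos hx.1.1.1 hx.1.2.1
    exact ⟨⟨this, hx.2⟩, trivial, this.ne'⟩
  · rintro ⟨n, x⟩ hx
    simp only [Finset.mem_sigma, Nat.mem_divisorsAntidiagonal] at hx
    obtain ⟨_, rfl, _⟩ := hx
    rfl

lemma conv_sum_le (u v : ArithmeticFunction ℝ) (hu : ∀ n, 0 ≤ u n) (hv : ∀ n, 0 ≤ v n) (M : ℕ) :
    ∑ n ∈ Finset.Ioc 0 M, (u * v) n ≤
      (∑ a ∈ Finset.Ioc 0 M, u a) * ∑ b ∈ Finset.Ioc 0 M, v b := by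
  have h := conv_sum u v (fun n => if n ≤ M then 1 else 0) M (fun n hn => if_neg (by omega))
  have e : ∑ n ∈ Finset.Ioc 0 M, (u * v) n = ∑ n ∈ Finset.Ioc 0 M, (u * v) n * (if n ≤ M then 1 else 0) := by
    apply Finset.sum_congr rfl
    intro n hn
    rw [if_pos (Finset.mem_Ioc.mp hn).2, mul_one]
  rw [e, h, Finset.sum_mul]
  apply Finset.sum_le_sum; intro a _
  apply mul_le_mul_of_nonneg_left _ (hu a)
  apply Finset.sum_le_sum; intro b _
  have := hv b
  split_ifs <;> simp [this]

lemma sum_ee_le (M : ℕ) : ∑ n ∈ Finset.Ioc 0 M, ee n ≤ 1 + Real.log M := by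
  have h := harmonic_le_one_add_log M
  rw [harmonic_eq_sum_Icc] at h
  push_cast at h
  exact h

lemma sum_tt_le (g M : ℕ) : ∑ n ∈ Finset.Ioc 0 M, tt g n ≤ (1 + Real.log M) ^ g := by
  induction g with
  | zero =>
    rw [tt_zero]
    simp only [ArithmeticFunction.one_apply, pow_zero]
    rw [Finset.sum_ite_eq']
    split_ifs <;> norm_num
  | succ k ih =>
    rw [tt_succ, pow_succ']
    refine (conv_sum_le ee (tt k) (fun n => by rw [ee_apply]; positivity) (tt_nonneg k) M).trans ?_
    have : 0 ≤ Real.log M := Real.log_natCast_nonneg M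
    apply mul_le_mul (sum_ee_le M) ih (Finset.sum_nonneg fun n _ => tt_nonneg k n) (by positivity)

lemma posLog_antitone (x : ℝ) (hx : 0 ≤ x) {m n : ℕ} (hm : 0 < m) (h : m ≤ n) :
    posLog (x / n) ≤ posLog (x / m) := by
  apply posLog_le_posLog (by positivity)
  gcongr

lemma posLog_step (x : ℝ) (hx : 0 < x) {m n : ℕ} (hm : 0 < m) (hn : 0 < n) :
    posLog (x / m) - Real.log n ≤ posLog (x / (m * n)) := by
  have h1 : x / m = (x / (m * n)) * n := by field_simp
  rw [h1]
  have h2 := posLog_mul (x := x / (m * n)) (y := n)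
  rw [log_of_nat_eq_posLog] at h2
  linarith

lemma pow_sub_le (r : ℕ) (u v : ℝ) (hv : 0 ≤ v) (h : v ≤ u) :
    u ^ (r + 1) - v ^ (r + 1) ≤ (r + 1) * u ^ r * (u - v) := by
  induction r with
  | zero => simp
  | succ k ih =>
    have hu : 0 ≤ u := hv.trans h
    have h1 : v ^ (k+1) ≤ u ^ (k+1) := pow_le_pow_left₀ hv h _
    have : u ^ (k + 1 + 1) - v ^ (k + 1 + 1) = u * (u ^ (k+1) - v ^ (k+1)) + v ^ (k+1) * (u - v) := by ring
    rw [this]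
    have h2 : u * (u ^ (k+1) - v ^ (k+1)) ≤ u * ((k + 1) * u ^ k * (u - v)) := by gcongr
    have h3 : v ^ (k+1) * (u - v) ≤ u ^ (k+1) * (u - v) := by
      apply mul_le_mul_of_nonneg_right h1; linarith
    calc _ ≤ u * ((k + 1) * u ^ k * (u - v)) + u ^ (k+1) * (u - v) := add_le_add h2 h3
      _ = _ := by push_cast; ring

lemma telescope (x : ℝ) (hx : 0 < x) (r M : ℕ) :
    posLog x ^ (r+1) - posLog (x / (M + 1 : ℕ)) ^ (r+1) ≤
      (r + 1) * ∑ m ∈ Finset.Ioc 0 M, ee m * posLog (x / m) ^ r := by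
  induction M with
  | zero => simp
  | succ M ih =>
    rw [Finset.sum_Ioc_succ_top (by omega), mul_add]
    have hm : (0:ℝ) < (M + 1 : ℕ) := by positivity
    have h1 := pow_sub_le r (posLog (x / (M + 1 : ℕ))) (posLog (x / (M + 1 + 1 : ℕ))) posLog_nonneg
      (posLog_antitone x hx.le (by omega) (by omega))
    have h2 : posLog (x / (M + 1 : ℕ)) - posLog (x / (M + 1 + 1 : ℕ)) ≤ ee (M+1) := by
      have e : x / (M + 1 : ℕ) = (x / (M + 1 + 1 : ℕ)) * (((M + 1 + 1 : ℕ) : ℝ) / (M + 1 : ℕ)) := by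
        field_simp
      have h3 := posLog_mul (x := x / (M + 1 + 1 : ℕ)) (y := ((M + 1 + 1 : ℕ) : ℝ) / (M + 1 : ℕ))
      rw [← e] at h3
      have h4 : posLog (((M + 1 + 1 : ℕ) : ℝ) / (M + 1 : ℕ)) ≤ ee (M+1) := by
        have e2 : ((M + 1 + 1 : ℕ) : ℝ) / (M + 1 : ℕ) = 1 + ee (M+1) := by
          rw [ee_apply]; push_cast; field_simp
        rw [e2]
        have : 0 ≤ ee (M+1) := by rw [ee_apply]; positivity
        rw [posLog_apply, max_le_iff]
        refine ⟨this, ?_⟩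
        have := Real.log_le_sub_one_of_pos (show 0 < 1 + ee (M+1) by linarith)
        linarith
      linarith
    have h5 : (r + 1 : ℝ) * posLog (x / (M + 1 : ℕ)) ^ r * (posLog (x / (M + 1 : ℕ)) - posLog (x / (M + 1 + 1 : ℕ))) ≤
        (r + 1 : ℝ) * posLog (x / (M + 1 : ℕ)) ^ r * ee (M+1) := by
      apply mul_le_mul_of_nonneg_left h2
      have := posLog_nonneg (x := x / (M + 1 : ℕ))
      positivity
    have h6 : (r + 1 : ℝ) * (ee (M+1) * posLog (x / (M + 1 : ℕ)) ^ r) = (r + 1 : ℝ) * posLog (x / (M + 1 : ℕ)) ^ r * ee (M+1) := by ring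
    rw [h6]
    linarith

lemma posLog_eq_zero_of_lt {x : ℝ} (hx : 0 < x) {n : ℕ} (h : x ≤ n) : posLog (x / n) = 0 := by
  rw [posLog_eq_zero_iff, abs_of_nonneg (by positivity)]
  have : (0:ℝ) < n := hx.trans_le h
  rw [div_le_one this]; exact h

lemma T_lower (g : ℕ) (x : ℝ) (hx : 0 < x) (M : ℕ) (hM : x ≤ M) :
    posLog x ^ (g + 1) / (g + 1).factorial ≤ ∑ n ∈ Finset.Ioc 0 M, tt g n * posLog (x / n) := by
  induction g generalizing x with
  | zero =>
    rw [tt_zero]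
    have hM1 : 0 < M := by
      have : (0:ℝ) < M := hx.trans_le hM
      exact_mod_cast this
    have : ∑ n ∈ Finset.Ioc 0 M, (1 : ArithmeticFunction ℝ) n * posLog (x / n) = posLog x := by
      simp only [ArithmeticFunction.one_apply, ite_mul, one_mul, zero_mul]
      rw [Finset.sum_ite_eq', if_pos (by simp; omega)]
      simp
    rw [this]; simp
  | succ k ih =>
    have hM0 : (0:ℝ) < M := hx.trans_le hM
    rw [tt_succ, conv_sum ee (tt k) (fun n => posLog (x / n)) M
      (fun n hn => posLog_eq_zero_of_lt hx (hM.trans (by exact_mod_cast hn.le)))]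
    have h1 : ∑ a ∈ Finset.Ioc 0 M, ee a * (posLog (x / a) ^ (k+1) / (k+1).factorial) ≤
        ∑ a ∈ Finset.Ioc 0 M, ee a * ∑ b ∈ Finset.Ioc 0 M, tt k b * posLog (x / (a * b : ℕ)) := by
      apply Finset.sum_le_sum
      intro a ha
      rw [Finset.mem_Ioc] at ha
      have ha0 : (1:ℝ) ≤ a := by exact_mod_cast ha.1
      apply mul_le_mul_of_nonneg_left
      · have h2 := ih (x / a) (by positivity) ((div_le_self hx.le ha0).trans hM)
        refine h2.trans (le_of_eq ?_)
        apply Finset.sum_congr rfl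
        intro b _
        rw [div_div]; push_cast; rfl
      · rw [ee_apply]; positivity
    refine le_trans ?_ h1
    have h3 := telescope x hx (k+1) M
    rw [posLog_eq_zero_of_lt hx (hM.trans (by push_cast; linarith))] at h3
    rw [zero_pow (by omega), sub_zero] at h3
    have h4 : ∑ a ∈ Finset.Ioc 0 M, ee a * (posLog (x / a) ^ (k+1) / (k+1).factorial) =
       (∑ a ∈ Finset.Ioc 0 M, ee a * posLog (x / a) ^ (k+1)) / (k+1).factorial := by
      rw [Finset.sum_div]; apply Finset.sum_congr rfl; intros; ring
    rw [h4, Nat.factorial_succ (k+1)]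
    push_cast
    rw [div_le_div_iff₀ (by positivity) (by positivity)]
    push_cast at h3
    have : (0:ℝ) < (k+1).factorial := by positivity
    nlinarith

lemma tt_prime (g : ℕ) {p : ℕ} (hp : p.Prime) : tt g p = g / p := by
  induction g with
  | zero => rw [tt_zero, ArithmeticFunction.one_apply, if_neg hp.one_lt.ne']; simp
  | succ k ih =>
    have h := mul_prime_pow ee (tt k) hp 1
    rw [pow_one] at h
    rw [tt_succ, h]
    have h1 : tt k 1 = 1 := (tt_mult k).map_one
    have h0 : (Finset.HasAntidiagonal.antidiagonal 1) = {(0,1),(1,0)} := rfl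
    rw [h0, Finset.sum_pair (by decide)]
    simp [ih, h1, ee_apply]
    ring

lemma tt_prime_pow_le (g : ℕ) {p : ℕ} (hp : p.Prime) (j : ℕ) :
    tt g (p ^ j) ≤ ((j : ℝ) + 1) ^ g * ((p:ℝ)⁻¹) ^ j := by
  induction g generalizing j with
  | zero =>
    rw [tt_zero, ArithmeticFunction.one_apply]
    split_ifs with h
    · have : j = 0 := by
        by_contra hj
        exact (Nat.one_lt_pow hj hp.one_lt).ne' h
      simp [this]
    · positivity
  | succ k ih =>
    rw [tt_succ, mul_prime_pow _ _ hp]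
    calc _ ≤ ∑ x ∈ Finset.HasAntidiagonal.antidiagonal j, ((j : ℝ) + 1) ^ k * ((p:ℝ)⁻¹) ^ j := by
          apply Finset.sum_le_sum
          intro x hx
          rw [Finset.HasAntidiagonal.mem_antidiagonal] at hx
          have h1 := ih x.2
          rw [ee_apply]
          have hxj : (x.2 : ℝ) ≤ j := by exact_mod_cast (by omega : x.2 ≤ j)
          calc _ ≤ ((p ^ x.1 : ℕ) : ℝ)⁻¹ * (((x.2 : ℝ) + 1) ^ k * ((p:ℝ)⁻¹) ^ x.2) := by gcongr
            _ = ((x.2 : ℝ) + 1) ^ k * ((p:ℝ)⁻¹) ^ j := by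
                rw [← hx, pow_add]; push_cast; rw [← inv_pow]; ring
            _ ≤ _ := by gcongr
      _ = _ := by
          rw [Finset.sum_const, Finset.Nat.card_antidiagonal, nsmul_eq_mul]; push_cast; ring

lemma summable_poly_geom (g : ℕ) {q : ℝ} (h0 : 0 ≤ q) (h1 : q < 1) :
    Summable (fun j : ℕ => ((j:ℝ) + 1) ^ g * q ^ j) := by
  have h := summable_pow_mul_geometric_of_norm_lt_one (R := ℝ) g (r := q) (by rw [Real.norm_eq_abs, abs_of_nonneg h0]; exact h1)
  rcases eq_or_lt_of_le h0 with h00 | h00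
  · subst h00
    apply summable_of_ne_finset_zero (s := {0})
    intro b hb
    simp at hb
    simp [hb]
  have h2 := (summable_nat_add_iff 1).mpr h
  have h3 := h2.mul_right q⁻¹
  refine h3.congr ?_
  intro j
  push_cast
  rw [pow_succ]
  field_simp

lemma prime_inv_bounds {p : ℕ} (hp : p.Prime) : 0 < (p:ℝ)⁻¹ ∧ (p:ℝ)⁻¹ ≤ 1/2 := by
  have : (2:ℝ) ≤ p := by exact_mod_cast hp.two_le
  refine ⟨by positivity, ?_⟩
  rw [inv_le_comm₀ (by positivity) (by norm_num)]
  norm_num; exact hp.two_le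

lemma tt_summable (g : ℕ) {p : ℕ} (hp : p.Prime) : Summable (fun j : ℕ => tt g (p ^ j)) := by
  obtain ⟨h0, h1⟩ := prime_inv_bounds hp
  exact Summable.of_nonneg_of_le (fun j => tt_nonneg g _) (tt_prime_pow_le g hp)
    (summable_poly_geom g h0.le (by linarith))

lemma tt_tsum (g : ℕ) {p : ℕ} (hp : p.Prime) : ∑' j : ℕ, tt g (p ^ j) = ((1 - (p:ℝ)⁻¹)⁻¹) ^ g := by
  obtain ⟨h0, h1⟩ := prime_inv_bounds hp
  induction g with
  | zero =>
    rw [tt_zero, tsum_eq_single 0]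
    · simp
    · intro j hj
      rw [ArithmeticFunction.one_apply, if_neg (Nat.one_lt_pow hj hp.one_lt).ne']
  | succ k ih =>
    have e1 : ∀ j, ee (p ^ j) = ((p:ℝ)⁻¹) ^ j := by intro j; rw [ee_apply]; push_cast; rw [inv_pow]
    have hs : Summable (fun j : ℕ => ee (p ^ j)) := by
      simp_rw [e1]
      exact summable_geometric_of_lt_one h0.le (by linarith)
    rw [tt_succ]
    simp_rw [mul_prime_pow _ _ hp]
    rw [← tsum_mul_tsum_eq_tsum_sum_antidiagonal_of_summable_norm (f := fun j => ee (p^j)) (g := fun j => tt k (p^j)) hs.norm (tt_summable k hp).norm,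
      ih, pow_succ']
    congr 1
    simp_rw [e1]
    exact tsum_geometric_of_lt_one h0.le (by linarith)

lemma tt_squarefree (κ : ℕ) {d : ℕ} (hd : Squarefree d) :
    (κ : ℝ) ^ (#d.primeFactors) = d * tt κ d := by
  have h := (tt_mult κ).map_prod_of_subset_primeFactors d d.primeFactors subset_rfl
  rw [Nat.prod_primeFactors_of_squarefree hd] at h
  rw [h, Finset.prod_congr rfl (fun p hp => tt_prime κ (Nat.prime_of_mem_primeFactors hp))]
  rw [Finset.prod_div_distrib]
  have h2 : (∏ p ∈ d.primeFactors, (p:ℝ)) = d := by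
    rw [← Nat.cast_prod, Nat.prod_primeFactors_of_squarefree hd]
  have : (d:ℝ) ≠ 0 := by exact_mod_cast hd.ne_zero
  rw [h2, Finset.prod_const]
  field_simp

end SieveArith

namespace SieveArith

lemma log_le_two_sqrt {n : ℕ} : Real.log n ≤ 2 * Real.sqrt n := by
  have h1 : Real.log n = 2 * Real.log (Real.sqrt n) := by
    rw [Real.log_sqrt (by positivity)]; ring
  rw [h1]
  have := Real.log_le_self (Real.sqrt_nonneg (n:ℝ))
  linarith

lemma log_div_sq_le {n : ℕ} : Real.log n / (n:ℝ)^2 ≤ 2 * (1 / (n:ℝ) ^ (3/2 : ℝ)) := by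
  rcases Nat.eq_zero_or_pos n with rfl | hn
  · simp
  have hn' : (0:ℝ) < n := by exact_mod_cast hn
  have e : (n:ℝ)^2 = (n:ℝ) ^ (3/2 : ℝ) * Real.sqrt n := by
    rw [Real.sqrt_eq_rpow, ← Real.rpow_add hn', ← Real.rpow_natCast]; norm_num
  rw [e, div_le_iff₀ (by positivity)]
  have := @log_le_two_sqrt n
  have h2 : 0 < (n:ℝ) ^ (3/2 : ℝ) := by positivity
  have : 2 * (1 / (n:ℝ) ^ (3/2 : ℝ)) * ((n:ℝ) ^ (3/2 : ℝ) * Real.sqrt n) = 2 * Real.sqrt n := by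
    field_simp
  linarith

lemma summable_log_div_sq : Summable (fun n : ℕ => Real.log n / (n:ℝ)^2) := by
  refine Summable.of_nonneg_of_le (fun n => ?_) (fun n => log_div_sq_le) ?_
  · have := Real.log_natCast_nonneg n
    positivity
  · exact (Real.summable_one_div_nat_rpow.mpr (by norm_num)).mul_left 2

noncomputable def cLog : ℝ := ∑' n : ℕ, Real.log n / (n:ℝ)^2

lemma cLog_nonneg : 0 ≤ cLog := tsum_nonneg fun n => by
  have := Real.log_natCast_nonneg n
  positivity

lemma sum_log_div_sq_le (s : Finset ℕ) : ∑ n ∈ s, Real.log n / (n:ℝ)^2 ≤ cLog :=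
  summable_log_div_sq.sum_le_tsum s fun n _ => by
    have := Real.log_natCast_nonneg n
    positivity

/-- `∑_{p ≤ N} log p / p`. -/
noncomputable def SP (N : ℕ) : ℝ := ∑ p ∈ Nat.primesLE N, Real.log p / p

lemma log_factorial_eq (N : ℕ) : Real.log (N.factorial) =
    ∑ p ∈ Nat.primesLE N, (N.factorial.factorization p) * Real.log p := by
  rw [Real.log_nat_eq_sum_factorization]
  have : N.factorial.primeFactors = Nat.primesLE N := by
    ext p
    simp only [Nat.mem_primeFactors, Nat.mem_primesLE]
    constructor
    · rintro ⟨h1, h2, _⟩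
      exact ⟨(h1.dvd_factorial).mp h2, h1⟩
    · rintro ⟨h1, h2⟩
      exact ⟨h2, h2.dvd_factorial.mpr h1, N.factorial_ne_zero⟩
  rw [Finsupp.sum, Nat.support_factorization, this]

lemma SP_lower (N : ℕ) (hN : 1 ≤ N) : Real.log N - (1 + 2 * cLog) ≤ SP N := by
  have hN' : (0:ℝ) < N := by exact_mod_cast hN
  have h1 : N * Real.log N - N ≤ Real.log N.factorial := by
    have := Stirling.le_log_factorial_stirling (n := N) (by omega)
    have h2 : 0 ≤ Real.log N := Real.log_natCast_nonneg N
    have h3 : 0 ≤ Real.log (2 * π) := Real.log_nonneg (by nlinarith [Real.pi_gt_three])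
    linarith
  have h2 : Real.log N.factorial ≤ N * (SP N + 2 * cLog) := by
    rw [log_factorial_eq]
    have h3 : ∑ p ∈ Nat.primesLE N, (N.factorial.factorization p) * Real.log p ≤
        ∑ p ∈ Nat.primesLE N, N * (Real.log p / p + 2 * (Real.log p / (p:ℝ)^2)) := by
      apply Finset.sum_le_sum
      intro p hp
      have hp' : p.Prime := (Nat.mem_primesLE.mp hp).2
      have := Fact.mk hp'
      have hp2 : (2:ℝ) ≤ p := by exact_mod_cast hp'.two_le
      have hl : 0 ≤ Real.log p := Real.log_natCast_nonneg p
      have h4 := sub_one_mul_padicValNat_factorial (p := p) N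
      have h5 : ((p:ℝ) - 1) * (N.factorial.factorization p) ≤ N := by
        rw [Nat.factorization_def _ hp']
        have : (p - 1) * padicValNat p N.factorial ≤ N := by rw [h4]; omega
        have h6 : (((p - 1 : ℕ)):ℝ) * (padicValNat p N.factorial : ℝ) ≤ N := by exact_mod_cast this
        rwa [Nat.cast_sub hp'.one_lt.le, Nat.cast_one] at h6
      have h7 : ((N.factorial.factorization p : ℕ) : ℝ) ≤ N * (1 / p + 2 / (p:ℝ)^2) := by
        have h8 : ((N.factorial.factorization p : ℕ) : ℝ) ≤ N / ((p:ℝ) - 1) := by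
          rw [le_div_iff₀ (by linarith)]; linarith
        refine h8.trans ?_
        rw [div_eq_mul_one_div]
        apply mul_le_mul_of_nonneg_left _ hN'.le
        rw [div_add_div _ _ (by positivity) (by positivity), div_le_div_iff₀ (by linarith) (by positivity)]
        nlinarith
      calc _ ≤ N * (1 / p + 2 / (p:ℝ)^2) * Real.log p := by gcongr
        _ = _ := by ring
    refine h3.trans ?_
    rw [← Finset.mul_sum, Finset.sum_add_distrib, ← Finset.mul_sum]
    unfold SP
    have := sum_log_div_sq_le (Nat.primesLE N)
    gcongr
  have h3 : N * (Real.log N - (1 + 2 * cLog)) ≤ N * SP N := by linarith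
  exact le_of_mul_le_mul_left h3 hN'

lemma SP_upper (N : ℕ) (hN : 1 ≤ N) : SP N ≤ Real.log N + Real.log 4 := by
  have hN' : (0:ℝ) < N := by exact_mod_cast hN
  have h1 : Real.log N.factorial ≤ N * Real.log N := by
    rw [← Real.log_pow]
    apply Real.log_le_log (by positivity)
    exact_mod_cast Nat.factorial_le_pow N
  have h2 : N * SP N - Real.log 4 * N ≤ Real.log N.factorial := by
    rw [log_factorial_eq]
    have ht := Chebyshev.theta_le_log4_mul_x hN'.le
    rw [Chebyshev.theta_eq_sum_primesLE_log] at ht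
    have h3 : N * SP N ≤ ∑ p ∈ Nat.primesLE N, (N.factorial.factorization p) * Real.log p +
       ∑ p ∈ Nat.primesLE N, Real.log p := by
      unfold SP
      rw [← Finset.sum_add_distrib, Finset.mul_sum]
      apply Finset.sum_le_sum
      intro p hp
      have hp' : p.Prime := (Nat.mem_primesLE.mp hp).2
      have hl : 0 ≤ Real.log p := Real.log_natCast_nonneg p
      have h5 : N / p ≤ N.factorial.factorization p := by
        rw [← hp'.pow_dvd_iff_le_factorization N.factorial_ne_zero]
        have := Fact.mk hp'
        have h8 := padicValNat_factorial_mul (p := p) (N / p)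
        have h9 : p ^ (N / p) ∣ (p * (N / p)).factorial := by
          rw [hp'.pow_dvd_iff_le_factorization (Nat.factorial_ne_zero _), Nat.factorization_def _ hp', h8]
          omega
        exact h9.trans (Nat.factorial_dvd_factorial (Nat.mul_div_le N p))
      have h6 : (N:ℝ) / p ≤ (N.factorial.factorization p : ℝ) + 1 := by
        have := Nat.lt_floor_add_one ((N:ℝ)/p)
        rw [Nat.floor_div_eq_div] at this
        have h7 : ((N / p : ℕ) : ℝ) ≤ (N.factorial.factorization p : ℝ) := by exact_mod_cast h5
        linarith
      calc _ = (N:ℝ)/p * Real.log p := by ring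
        _ ≤ ((N.factorial.factorization p : ℝ) + 1) * Real.log p := by gcongr
        _ = _ := by ring
    linarith
  have h3 : N * SP N ≤ N * (Real.log N + Real.log 4) := by linarith
  exact le_of_mul_le_mul_left h3 hN'

/-- `∑_{p ∣ E} log p / p`. -/
noncomputable def PE (E : ℕ) : ℝ := ∑ p ∈ E.primeFactors, Real.log p / p

lemma PE_nonneg (E : ℕ) : 0 ≤ PE E := Finset.sum_nonneg fun p _ => by
  have := Real.log_natCast_nonneg p
  positivity

lemma one_lt_log_three : 1 < Real.log 3 := by
  rw [Real.lt_log_iff_exp_lt (by norm_num)]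
  exact Real.exp_one_lt_three

lemma PE_le (E : ℕ) (hE : 1 ≤ E) : PE E ≤ Real.log (Real.log (3 * E)) + (Real.log 4 + 1) := by
  have hE' : (1:ℝ) ≤ E := by exact_mod_cast hE
  set x := Real.log (3 * E) with hx
  have hx1 : 1 < x := by
    refine one_lt_log_three.trans_le (Real.log_le_log (by norm_num) (by linarith))
  unfold PE
  rw [← Finset.sum_filter_add_sum_filter_not _ (fun p : ℕ => (p:ℝ) ≤ x)]
  have h1 : ∑ p ∈ E.primeFactors with ((p:ℕ):ℝ) ≤ x, Real.log p / p ≤ SP ⌊x⌋₊ := by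
    unfold SP
    apply Finset.sum_le_sum_of_subset_of_nonneg
    · intro p hp
      rw [Finset.mem_filter] at hp
      rw [Nat.mem_primesLE]
      exact ⟨Nat.le_floor hp.2, Nat.prime_of_mem_primeFactors hp.1⟩
    · intro p _ _
      have := Real.log_natCast_nonneg p
      positivity
  have hf : 1 ≤ ⌊x⌋₊ := Nat.le_floor (by simpa using hx1.le)
  have h2 := SP_upper _ hf
  have h3 : Real.log ⌊x⌋₊ ≤ Real.log x := by
    apply Real.log_le_log (by exact_mod_cast hf)
    exact Nat.floor_le (by linarith)
  have h4 : ∑ p ∈ E.primeFactors with ¬ ((p:ℕ):ℝ) ≤ x, Real.log p / p ≤ 1 := by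
    calc _ ≤ ∑ p ∈ E.primeFactors with ¬ ((p:ℕ):ℝ) ≤ x, Real.log p / x := by
          apply Finset.sum_le_sum
          intro p hp
          rw [Finset.mem_filter, not_le] at hp
          have := Real.log_natCast_nonneg p
          have h0 := hp.2.le
          gcongr
      _ ≤ ∑ p ∈ E.primeFactors, Real.log p / x := by
          apply Finset.sum_le_sum_of_subset_of_nonneg (Finset.filter_subset _ _)
          intro p _ _
          have := Real.log_natCast_nonneg p
          positivity
      _ ≤ Real.log E / x := by
          rw [← Finset.sum_div]
          gcongr
          rw [Real.log_nat_eq_sum_factorization, Finsupp.sum, Nat.support_factorization]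
          apply Finset.sum_le_sum
          intro p hp
          have hl := Real.log_natCast_nonneg p
          have : (1:ℝ) ≤ (E.factorization p : ℝ) := by
            exact_mod_cast (Nat.prime_of_mem_primeFactors hp).factorization_pos_of_dvd (by omega) (Nat.dvd_of_mem_primeFactors hp)
          nlinarith
      _ ≤ 1 := by
          rw [div_le_one (by linarith)]
          apply Real.log_le_log (by linarith) (by linarith)
  linarith

end SieveArith

namespace SieveArith
open ArithmeticFunction

/-- The local data of the sieve. -/
structure Dat (g : ℕ) where
  ρ : ℕ → ℕ
  E : ℕ
  hE : 1 ≤ E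
  hle : ∀ p, p.Prime → ρ p ≤ g
  hlt : ∀ p, p.Prime → ρ p < p
  heq : ∀ p, p.Prime → ¬ p ∣ E → ρ p = g

variable {g : ℕ} (S : Dat g)

/-- Completely multiplicative function with `f p = ρ p / p`. -/
noncomputable def ff : ArithmeticFunction ℝ :=
  ⟨fun n => if n = 0 then 0 else n.factorization.prod fun p j => ((S.ρ p : ℝ) / p) ^ j, by simp⟩

lemma ff_apply {n : ℕ} (hn : n ≠ 0) : ff S n = n.factorization.prod fun p j => ((S.ρ p : ℝ) / p) ^ j := by
  simp only [ff, ArithmeticFunction.coe_mk, if_neg hn]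

lemma ff_one : ff S 1 = 1 := by
  rw [ff_apply S one_ne_zero]; simp

lemma ff_mul (m n : ℕ) : ff S (m * n) = ff S m * ff S n := by
  rcases eq_or_ne m 0 with rfl | hm
  · simp
  rcases eq_or_ne n 0 with rfl | hn
  · simp
  rw [ff_apply S hm, ff_apply S hn, ff_apply S (mul_ne_zero hm hn), Nat.factorization_mul hm hn,
    Finsupp.prod_add_index']
  · intro; simp
  · intros; rw [pow_add]

lemma ff_pow (n j : ℕ) : ff S (n ^ j) = ff S n ^ j := by
  induction j with
  | zero => simp [ff_one]
  | succ j ih => rw [pow_succ, ff_mul, ih, pow_succ]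

lemma ff_prime {p : ℕ} (hp : p.Prime) : ff S p = (S.ρ p : ℝ) / p := by
  rw [ff_apply S hp.ne_zero, hp.factorization]
  simp

lemma ff_nonneg (n : ℕ) : 0 ≤ ff S n := by
  rcases eq_or_ne n 0 with rfl | hn
  · simp
  rw [ff_apply S hn]
  apply Finset.prod_nonneg
  intros; positivity

lemma ff_mult : (ff S).IsMultiplicative :=
  ⟨ff_one S, fun _ => ff_mul S _ _⟩

/-- `μ f`. -/
noncomputable def mf : ArithmeticFunction ℝ :=
  (((ArithmeticFunction.moebius : ArithmeticFunction ℤ) : ArithmeticFunction ℝ)).pmul (ff S)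

lemma mf_apply (n : ℕ) : mf S n = (ArithmeticFunction.moebius n : ℝ) * ff S n := by
  simp [mf, ArithmeticFunction.pmul_apply]

lemma mf_mult : (mf S).IsMultiplicative :=
  (ArithmeticFunction.isMultiplicative_moebius.intCast).pmul (ff_mult S)

lemma mf_mul_ff : mf S * ff S = 1 := by
  ext n
  rw [ArithmeticFunction.mul_apply]
  have h : ∀ x ∈ n.divisorsAntidiagonal, mf S x.1 * ff S x.2 = (ArithmeticFunction.moebius x.1 : ℝ) * ff S n := by
    intro x hx
    rw [Nat.mem_divisorsAntidiagonal] at hx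
    rw [mf_apply, mul_assoc, ← ff_mul, hx.1]
  rw [Finset.sum_congr rfl h, ← Finset.sum_mul]
  have h2 := congrArg (fun u : ArithmeticFunction ℝ => u n) (ArithmeticFunction.coe_moebius_mul_coe_zeta (R := ℝ))
  rw [ArithmeticFunction.mul_apply] at h2
  have h3 : ∑ x ∈ n.divisorsAntidiagonal, (ArithmeticFunction.moebius x.1 : ℝ) = (1 : ArithmeticFunction ℝ) n := by
    rw [← h2]
    apply Finset.sum_congr rfl
    intro x hx
    rw [Nat.mem_divisorsAntidiagonal] at hx
    have : x.2 ≠ 0 := by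
      intro h0; rw [h0] at hx; simp at hx; exact hx.2 hx.1.symm
    simp [ArithmeticFunction.natCoe_apply, ArithmeticFunction.zeta_apply, this]
  rw [h3, ArithmeticFunction.one_apply]
  split_ifs with h
  · subst h; simp [ff_one]
  · simp

/-- The convolution quotient `tt g / f`. -/
noncomputable def kk : ArithmeticFunction ℝ := tt g * mf S

lemma kk_mult : (kk S).IsMultiplicative := (tt_mult g).mul (mf_mult S)

lemma kk_mul_ff : kk S * ff S = tt g := by
  unfold kk; rw [mul_assoc, mf_mul_ff, mul_one]

lemma mf_prime_pow {p : ℕ} (hp : p.Prime) (j : ℕ) :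
    mf S (p ^ j) = if j = 0 then 1 else if j = 1 then - ((S.ρ p : ℝ) / p) else 0 := by
  rw [mf_apply, ff_pow, ff_prime S hp]
  split_ifs with h0 h1
  · subst h0; simp
  · subst h1; simp [ArithmeticFunction.moebius_apply_prime hp]
  · rw [ArithmeticFunction.moebius_apply_prime_pow hp h0, if_neg h1]; simp

lemma kk_prime_pow {p : ℕ} (hp : p.Prime) (j : ℕ) :
    kk S (p ^ (j+1)) = tt g (p ^ (j+1)) - (S.ρ p : ℝ) / p * tt g (p ^ j) := by
  unfold kk
  rw [mul_prime_pow _ _ hp, Finset.Nat.sum_antidiagonal_eq_sum_range_succ (fun x y => tt g (p^x) * mf S (p^y)),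
    Finset.sum_range_succ, Finset.sum_range_succ, Finset.sum_eq_zero]
  · simp only [mf_prime_pow S hp]
    simp; ring
  · intro i hi
    rw [Finset.mem_range] at hi
    rw [mf_prime_pow S hp, if_neg (by omega), if_neg (by omega), mul_zero]

lemma kk_one : kk S 1 = 1 := (kk_mult S).map_one

lemma kk_prime {p : ℕ} (hp : p.Prime) : kk S p = ((g:ℝ) - S.ρ p) / p := by
  have := kk_prime_pow S hp 0
  rw [zero_add, pow_one, pow_zero, tt_prime g hp, (tt_mult g).map_one] at this
  rw [this]; ring

lemma kk_prime_nonneg {p : ℕ} (hp : p.Prime) : 0 ≤ kk S p := by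
  rw [kk_prime S hp]
  have : (S.ρ p : ℝ) ≤ g := by exact_mod_cast S.hle p hp
  apply div_nonneg (by linarith) (by positivity)

lemma kk_prime_le {p : ℕ} (hp : p.Prime) : kk S p ≤ if p ∣ S.E then (g:ℝ) / p else 0 := by
  rw [kk_prime S hp]
  split_ifs with h
  · gcongr; have : (0:ℝ) ≤ S.ρ p := by positivity
    linarith
  · rw [S.heq p hp h]; simp

lemma abs_kk_prime_pow_le {p : ℕ} (hp : p.Prime) (j : ℕ) :
    |kk S (p ^ j)| ≤ ((g:ℝ) + 1) * ((j:ℝ) + 1) ^ g * ((p:ℝ)⁻¹) ^ j := by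
  rcases j with _ | j
  · rw [pow_zero, kk_one]; simp
  rw [kk_prime_pow S hp]
  have h1 := tt_prime_pow_le g hp (j+1)
  have h2 := tt_prime_pow_le g hp j
  have h3 := tt_nonneg g (p ^ (j+1))
  have h4 := tt_nonneg g (p ^ j)
  have hr : (S.ρ p : ℝ) ≤ g := by exact_mod_cast S.hle p hp
  have h5 : (S.ρ p : ℝ) / p * tt g (p ^ j) ≤ g * ((((j+1:ℕ):ℝ) + 1) ^ g * ((p:ℝ)⁻¹) ^ (j+1)) := by
    calc (S.ρ p : ℝ) / p * tt g (p ^ j) ≤ (g:ℝ) / p * (((j:ℝ) + 1) ^ g * ((p:ℝ)⁻¹) ^ j) := by gcongr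
      _ ≤ (g:ℝ) / p * ((((j+1:ℕ):ℝ) + 1) ^ g * ((p:ℝ)⁻¹) ^ j) := by
        have : (j:ℝ) ≤ ((j+1:ℕ):ℝ) := by push_cast; linarith
        gcongr
      _ = _ := by rw [pow_succ]; ring
  have h6 : 0 ≤ (S.ρ p : ℝ) / p * tt g (p ^ j) := by positivity
  have h7 := abs_sub (tt g (p ^ (j+1))) ((S.ρ p : ℝ) / p * tt g (p ^ j))
  rw [abs_of_nonneg h3, abs_of_nonneg h6] at h7
  refine h7.trans ?_
  calc _ ≤ (((j+1:ℕ):ℝ) + 1) ^ g * ((p:ℝ)⁻¹) ^ (j+1) + g * ((((j+1:ℕ):ℝ) + 1) ^ g * ((p:ℝ)⁻¹) ^ (j+1)) := add_le_add h1 h5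
    _ = _ := by ring

/-- Constant for the prime power tails. -/
noncomputable def c1 (g : ℕ) : ℝ := 4 * ((g:ℝ) + 1) * ∑' j : ℕ, ((j:ℝ) + 1) ^ (g+1) * (1/2 : ℝ) ^ j

lemma c1_nonneg (g : ℕ) : 0 ≤ c1 g := by
  unfold c1
  have : 0 ≤ ∑' j : ℕ, ((j:ℝ) + 1) ^ (g+1) * (1/2 : ℝ) ^ j := tsum_nonneg fun j => by positivity
  positivity

/-- weighted absolute values at prime powers -/
noncomputable def wk (p j : ℕ) : ℝ := ((j:ℝ) + 1) * |kk S (p ^ j)|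

lemma wk_nonneg (p j : ℕ) : 0 ≤ wk S p j := by unfold wk; positivity

lemma wk_le {p : ℕ} (hp : p.Prime) (j : ℕ) :
    wk S p j ≤ ((g:ℝ) + 1) * (((j:ℝ) + 1) ^ (g+1) * ((p:ℝ)⁻¹) ^ j) := by
  unfold wk
  calc _ ≤ ((j:ℝ) + 1) * (((g:ℝ) + 1) * ((j:ℝ) + 1) ^ g * ((p:ℝ)⁻¹) ^ j) := by
        gcongr; exact abs_kk_prime_pow_le S hp j
    _ = _ := by ring

lemma wk_summable {p : ℕ} (hp : p.Prime) : Summable (wk S p) := by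
  obtain ⟨h0, h1⟩ := prime_inv_bounds hp
  exact Summable.of_nonneg_of_le (wk_nonneg S p) (wk_le S hp)
    ((summable_poly_geom (g+1) h0.le (by linarith)).mul_left _)

lemma wk_tail {p : ℕ} (hp : p.Prime) : ∑' j : ℕ, wk S p (j + 2) ≤ c1 g / (p:ℝ)^2 := by
  obtain ⟨h0, h1⟩ := prime_inv_bounds hp
  have hs := summable_poly_geom (g+1) (q := 1/2) (by norm_num) (by norm_num)
  have hs2 := (summable_nat_add_iff 2).mpr hs
  have hle : ∀ j : ℕ, wk S p (j+2) ≤ (4 * ((g:ℝ) + 1) / (p:ℝ)^2) * ((((j + 2 : ℕ):ℝ) + 1) ^ (g+1) * (1/2 : ℝ) ^ (j+2)) := by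
    intro j
    refine (wk_le S hp (j+2)).trans ?_
    have : ((p:ℝ)⁻¹) ^ (j+2) ≤ 4 / (p:ℝ)^2 * (1/2 : ℝ) ^ (j+2) := by
      have e : 4 / (p:ℝ)^2 * (1/2 : ℝ) ^ (j+2) = (1/2:ℝ)^j * ((p:ℝ)⁻¹)^2 := by
        rw [pow_add]; field_simp; norm_num
      rw [e, pow_add]
      gcongr
    calc _ ≤ ((g:ℝ) + 1) * ((((j + 2 : ℕ):ℝ) + 1) ^ (g+1) * (4 / (p:ℝ)^2 * (1/2 : ℝ) ^ (j+2))) := by gcongr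
      _ = _ := by ring
  refine (((summable_nat_add_iff 2).mpr (wk_summable S hp)).tsum_le_tsum hle (hs2.mul_left _)).trans ?_
  rw [tsum_mul_left]
  have h3 : ∑' j : ℕ, ((((j + 2 : ℕ):ℝ) + 1) ^ (g+1) * (1/2 : ℝ) ^ (j+2)) ≤ ∑' j : ℕ, ((j:ℝ) + 1) ^ (g+1) * (1/2 : ℝ) ^ j := by
    rw [← hs.sum_add_tsum_nat_add 2]
    have : 0 ≤ ∑ i ∈ Finset.range 2, ((i:ℝ) + 1) ^ (g+1) * (1/2 : ℝ) ^ i := Finset.sum_nonneg fun i _ => by positivity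
    linarith
  unfold c1
  calc _ ≤ (4 * ((g:ℝ) + 1) / (p:ℝ)^2) * ∑' j : ℕ, ((j:ℝ) + 1) ^ (g+1) * (1/2 : ℝ) ^ j := by gcongr
    _ = _ := by ring

lemma abs_kk_summable {p : ℕ} (hp : p.Prime) : Summable (fun j => |kk S (p ^ j)|) := by
  refine Summable.of_nonneg_of_le (fun j => abs_nonneg _) (fun j => ?_) (wk_summable S hp)
  unfold wk
  nlinarith [abs_nonneg (kk S (p ^ j)), (Nat.cast_nonneg j : (0:ℝ) ≤ j)]

lemma kk_summable {p : ℕ} (hp : p.Prime) : Summable (fun j => kk S (p ^ j)) :=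
  (abs_kk_summable S hp).of_abs

noncomputable def sp (p : ℕ) : ℝ := ∑' j : ℕ, kk S (p ^ j)
noncomputable def tp (p : ℕ) : ℝ := ∑' j : ℕ, |kk S (p ^ j)|
noncomputable def bp (p : ℕ) : ℝ := ∑' j : ℕ, (j:ℝ) * |kk S (p ^ j)|

lemma sp_eq {p : ℕ} (hp : p.Prime) : sp S p = (1 - (S.ρ p : ℝ) / p) * ((1 - (p:ℝ)⁻¹)⁻¹) ^ g := by
  have hm : ∀ j, j ∉ Finset.range 2 → mf S (p ^ j) = 0 := by
    intro j hj
    rw [Finset.mem_range] at hj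
    rw [mf_prime_pow S hp, if_neg (by omega), if_neg (by omega)]
  have hms : Summable (fun j => mf S (p ^ j)) := summable_of_ne_finset_zero (s := Finset.range 2) hm
  have hmt : ∑' j, mf S (p ^ j) = 1 - (S.ρ p : ℝ) / p := by
    rw [tsum_eq_sum hm]
    simp [Finset.sum_range_succ, mf_prime_pow S hp]
    ring
  unfold sp kk
  simp_rw [mul_prime_pow _ _ hp]
  rw [← tsum_mul_tsum_eq_tsum_sum_antidiagonal_of_summable_norm (f := fun j => tt g (p^j)) (g := fun j => mf S (p^j)) (tt_summable g hp).norm hms.norm,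
    tt_tsum g hp, hmt, mul_comm]

lemma tp_le {p : ℕ} (hp : p.Prime) : tp S p ≤ 1 + kk S p + c1 g / (p:ℝ)^2 := by
  unfold tp
  have hs := abs_kk_summable S hp
  rw [← hs.sum_add_tsum_nat_add 2]
  have h1 : ∑' j, |kk S (p ^ (j+2))| ≤ c1 g / (p:ℝ)^2 := by
    refine le_trans ?_ (wk_tail S hp)
    refine ((summable_nat_add_iff 2).mpr hs).tsum_le_tsum (fun j => ?_) ((summable_nat_add_iff 2).mpr (wk_summable S hp))
    unfold wk
    nlinarith [abs_nonneg (kk S (p ^ (j+2))), (Nat.cast_nonneg (j+2) : (0:ℝ) ≤ (j+2:ℕ))]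
  have h2 : ∑ i ∈ Finset.range 2, |kk S (p ^ i)| = 1 + kk S p := by
    simp [Finset.sum_range_succ, kk_one, abs_of_nonneg (kk_prime_nonneg S hp)]
  linarith

lemma sp_ge {p : ℕ} (hp : p.Prime) : 1 + kk S p - c1 g / (p:ℝ)^2 ≤ sp S p := by
  unfold sp
  have hs := kk_summable S hp
  rw [← hs.sum_add_tsum_nat_add 2]
  have h1 : -∑' j, kk S (p ^ (j+2)) ≤ c1 g / (p:ℝ)^2 := by
    refine le_trans ?_ (wk_tail S hp)
    rw [← tsum_neg]
    refine (((summable_nat_add_iff 2).mpr hs).neg).tsum_le_tsum (fun j => ?_) ((summable_nat_add_iff 2).mpr (wk_summable S hp))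
    unfold wk
    nlinarith [abs_nonneg (kk S (p ^ (j+2))), neg_abs_le (kk S (p ^ (j+2))), (Nat.cast_nonneg (j+2) : (0:ℝ) ≤ (j+2:ℕ))]
  have h2 : ∑ i ∈ Finset.range 2, kk S (p ^ i) = 1 + kk S p := by
    simp [Finset.sum_range_succ, kk_one]
  linarith

lemma jk_summable {p : ℕ} (hp : p.Prime) : Summable (fun j : ℕ => (j:ℝ) * |kk S (p ^ j)|) := by
  refine Summable.of_nonneg_of_le (fun j => by positivity) (fun j => ?_) (wk_summable S hp)
  unfold wk
  nlinarith [abs_nonneg (kk S (p ^ j))]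

lemma bp_le {p : ℕ} (hp : p.Prime) : bp S p ≤ kk S p + c1 g / (p:ℝ)^2 := by
  unfold bp
  have hs := jk_summable S hp
  rw [← hs.sum_add_tsum_nat_add 2]
  have h1 : ∑' j : ℕ, ((j + 2 : ℕ) : ℝ) * |kk S (p ^ (j+2))| ≤ c1 g / (p:ℝ)^2 := by
    refine le_trans ?_ (wk_tail S hp)
    refine ((summable_nat_add_iff 2).mpr hs).tsum_le_tsum (fun j => ?_) ((summable_nat_add_iff 2).mpr (wk_summable S hp))
    unfold wk
    nlinarith [abs_nonneg (kk S (p ^ (j+2)))]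
  have h2 : ∑ i ∈ Finset.range 2, (i:ℝ) * |kk S (p ^ i)| = kk S p := by
    simp [Finset.sum_range_succ, abs_of_nonneg (kk_prime_nonneg S hp)]
  linarith

noncomputable def c2 (g : ℕ) : ℝ := 2 * (g:ℝ)^2 + 8 * (g:ℝ)^3

lemma sp_lower {p : ℕ} (hp : p.Prime) : Real.exp (-(c2 g / (p:ℝ)^2)) ≤ sp S p := by
  rw [sp_eq S hp]
  obtain ⟨h0, h1⟩ := prime_inv_bounds hp
  have hp0 : (0:ℝ) < p := by exact_mod_cast hp.pos
  have hp1 : (1:ℝ) ≤ p := by exact_mod_cast hp.one_lt.le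
  have hr : (S.ρ p : ℝ) ≤ g := by exact_mod_cast S.hle p hp
  have hrp : (S.ρ p : ℝ) + 1 ≤ p := by exact_mod_cast S.hlt p hp
  have hb : 1 + (p:ℝ)⁻¹ ≤ (1 - (p:ℝ)⁻¹)⁻¹ := by
    rw [le_inv_comm₀ (by linarith) (by linarith), inv_eq_one_div (1 + _), le_div_iff₀ (by linarith)]
    nlinarith
  have hb2 : 1 + (g:ℝ) / p ≤ ((1 - (p:ℝ)⁻¹)⁻¹) ^ g := by
    have := one_add_mul_le_pow (show (-2:ℝ) ≤ (p:ℝ)⁻¹ by linarith) g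
    calc _ = 1 + (g:ℝ) * (p:ℝ)⁻¹ := by ring
      _ ≤ _ := this
      _ ≤ _ := by gcongr
  have hfrac : (p:ℝ)⁻¹ ≤ 1 - (S.ρ p : ℝ) / p := by
    have : (S.ρ p : ℝ) / p + (p:ℝ)⁻¹ = ((S.ρ p : ℝ) + 1) / p := by ring
    have h3 : ((S.ρ p : ℝ) + 1) / p ≤ 1 := by rw [div_le_one hp0]; exact hrp
    linarith
  by_cases hcase : (2 * (g:ℝ)) ≤ p
  · set v := (g:ℝ) / p with hv
    have hv0 : 0 ≤ v := by positivity
    have hv1 : v ≤ 1/2 := by rw [hv, div_le_iff₀ hp0]; linarith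
    have h5 : 1 - v ≤ 1 - (S.ρ p : ℝ) / p := by
      have : (S.ρ p : ℝ) / p ≤ v := by rw [hv]; gcongr
      linarith
    have h6 : (1 - v) * (1 + v) ≤ (1 - (S.ρ p : ℝ) / p) * ((1 - (p:ℝ)⁻¹)⁻¹) ^ g := by
      apply mul_le_mul h5 hb2 (by linarith) (by linarith)
    refine le_trans ?_ h6
    have h7 : Real.exp (-(c2 g / (p:ℝ)^2)) ≤ Real.exp (-(2 * v^2)) := by
      rw [Real.exp_le_exp, neg_le_neg_iff, hv, div_pow, ← mul_div_assoc]
      gcongr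
      unfold c2
      have : (0:ℝ) ≤ 8 * (g:ℝ)^3 := by positivity
      linarith
    refine h7.trans ?_
    rw [Real.exp_neg]
    have h8 := Real.add_one_le_exp (2 * v^2)
    rw [inv_le_comm₀ (Real.exp_pos _) (by nlinarith)]
    refine le_trans ?_ h8
    rw [inv_eq_one_div, div_le_iff₀ (by nlinarith)]
    have hw : v^2 ≤ 1/4 := by nlinarith
    have : (2 * v ^ 2 + 1) * ((1 - v) * (1 + v)) = 1 + v^2 * (1 - 2 * v^2) := by ring
    rw [this]
    nlinarith [mul_nonneg (sq_nonneg v) (show (0:ℝ) ≤ 1 - 2 * v^2 by linarith)]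
  · push Not at hcase
    have h5 : (p:ℝ)⁻¹ * 1 ≤ (1 - (S.ρ p : ℝ) / p) * ((1 - (p:ℝ)⁻¹)⁻¹) ^ g := by
      apply mul_le_mul hfrac _ zero_le_one (by linarith)
      have : 0 ≤ (g:ℝ) / p := by positivity
      linarith
    refine le_trans ?_ h5
    rw [mul_one, Real.exp_neg]
    apply inv_anti₀ hp0
    have h6 : 2 * (g:ℝ) ≤ c2 g / (p:ℝ)^2 := by
      rw [le_div_iff₀ (by positivity)]
      have : (p:ℝ)^2 ≤ (2 * (g:ℝ))^2 := by gcongr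
      calc 2 * (g:ℝ) * (p:ℝ)^2 ≤ 2 * (g:ℝ) * (2 * (g:ℝ))^2 := by gcongr
        _ ≤ c2 g := by unfold c2; nlinarith [sq_nonneg (g:ℝ)]
    have := Real.add_one_le_exp (c2 g / (p:ℝ)^2)
    linarith

lemma c2_nonneg (g : ℕ) : 0 ≤ c2 g := by unfold c2; positivity

noncomputable def c3 (g : ℕ) : ℝ := 2 * c1 g * Real.exp (c2 g)

lemma c3_nonneg (g : ℕ) : 0 ≤ c3 g := by
  have := c1_nonneg g
  unfold c3; positivity

lemma sp_pos {p : ℕ} (hp : p.Prime) : 0 < sp S p := (Real.exp_pos _).trans_le (sp_lower S hp)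

lemma tp_le_sp {p : ℕ} (hp : p.Prime) : tp S p ≤ sp S p * Real.exp (c3 g / (p:ℝ)^2) := by
  have h1 := tp_le S hp
  have h2 := sp_ge S hp
  have h3 : Real.exp (- c2 g) ≤ sp S p := by
    refine le_trans ?_ (sp_lower S hp)
    rw [Real.exp_le_exp, neg_le_neg_iff]
    apply div_le_self (c2_nonneg g)
    have : (1:ℝ) ≤ p := by exact_mod_cast hp.one_lt.le
    nlinarith
  have h4 := Real.add_one_le_exp (c3 g / (p:ℝ)^2)
  have h5 : 2 * (c1 g / (p:ℝ)^2) ≤ sp S p * (c3 g / (p:ℝ)^2) := by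
    have e : 2 * (c1 g / (p:ℝ)^2) = Real.exp (- c2 g) * (c3 g / (p:ℝ)^2) := by
      unfold c3
      rw [Real.exp_neg]
      field_simp
    rw [e]
    have := c3_nonneg g
    gcongr
  have h6 := sp_pos S hp
  nlinarith

end SieveArith

namespace SieveArith
open ArithmeticFunction

variable {g : ℕ} (S : Dat g)

noncomputable def Z2 : ℝ := ∑' n : ℕ, 1 / (n:ℝ)^2

lemma summable_Z2 : Summable (fun n : ℕ => 1 / (n:ℝ)^2) := Real.summable_one_div_nat_pow.mpr (by norm_num)

lemma Z2_nonneg : 0 ≤ Z2 := tsum_nonneg fun n => by positivity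

lemma sum_inv_sq_le (s : Finset ℕ) : ∑ n ∈ s, 1 / (n:ℝ)^2 ≤ Z2 :=
  summable_Z2.sum_le_tsum s fun n _ => by positivity

lemma sum_inv_sq_primes_le (s : Finset Nat.Primes) : ∑ p ∈ s, 1 / ((p:ℕ):ℝ)^2 ≤ Z2 := by
  have := sum_inv_sq_le (s.map ⟨fun p : Nat.Primes => (p:ℕ), Nat.Primes.coe_nat_injective⟩)
  rw [Finset.sum_map] at this
  exact this

lemma abs_kk_coprime {m n : ℕ} (h : m.Coprime n) : |kk S (m * n)| = |kk S m| * |kk S n| := by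
  rw [(kk_mult S).map_mul_of_coprime h, abs_mul]

lemma prod_tp_le (N : ℕ) : ∏ p ∈ N.primesBelow, tp S p ≤
    Real.exp (g * #S.E.primeFactors + c1 g * Z2) := by
  calc ∏ p ∈ N.primesBelow, tp S p ≤
      ∏ p ∈ N.primesBelow, Real.exp ((if p ∣ S.E then (g:ℝ) else 0) + c1 g * (1 / (p:ℝ)^2)) := by
        apply Finset.prod_le_prod
        · intro p _; exact tsum_nonneg fun j => abs_nonneg _
        · intro p hp
          have hp' := Nat.prime_of_mem_primesBelow hp
          have h1 := tp_le S hp'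
          have h2 := kk_prime_le S hp'
          have h3 : (if p ∣ S.E then (g:ℝ) / p else 0) ≤ (if p ∣ S.E then (g:ℝ) else 0) := by
            split_ifs
            · apply div_le_self (by positivity)
              exact_mod_cast hp'.one_lt.le
            · exact le_rfl
          have h4 := Real.add_one_le_exp ((if p ∣ S.E then (g:ℝ) else 0) + c1 g * (1 / (p:ℝ)^2))
          have : c1 g * (1 / (p:ℝ)^2) = c1 g / (p:ℝ)^2 := by ring
          linarith
    _ = Real.exp (∑ p ∈ N.primesBelow, (if p ∣ S.E then (g:ℝ) else 0) + c1 g * ∑ p ∈ N.primesBelow, (1 / (p:ℝ)^2)) := by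
        rw [← Real.exp_sum, Finset.sum_add_distrib, Finset.mul_sum]
    _ ≤ _ := by
        rw [Real.exp_le_exp]
        apply add_le_add
        · rw [← Finset.sum_filter, Finset.sum_const, nsmul_eq_mul, mul_comm]
          gcongr
          intro p hp
          rw [Finset.mem_filter] at hp
          rw [Nat.mem_primeFactors]
          exact ⟨Nat.prime_of_mem_primesBelow hp.1, hp.2, by have := S.hE; omega⟩
        · exact mul_le_mul_of_nonneg_left (sum_inv_sq_le _) (c1_nonneg g)

lemma summable_abs_kk : Summable (fun n => |kk S n|) := by
  apply summable_of_sum_range_le (c := Real.exp (g * #S.E.primeFactors + c1 g * Z2)) (fun n => abs_nonneg _)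
  intro N
  refine le_trans ?_ (prod_tp_le S N)
  obtain ⟨h1, h2⟩ := EulerProduct.summable_and_hasSum_smoothNumbers_prod_primesBelow_tsum
    (f := fun n => |kk S n|) (by simp [kk_one]) (fun h => abs_kk_coprime S h)
    (fun hp => by simpa using abs_kk_summable S hp) N
  have h3 : ∑ n ∈ Finset.range N, |kk S n| = ∑ n ∈ (Finset.range N).filter (· ∈ N.smoothNumbers), |kk S n| := by
    symm
    apply Finset.sum_subset (Finset.filter_subset _ _)
    intro n hn hn2
    rw [Finset.mem_range] at hn
    rcases Nat.eq_zero_or_pos n with rfl | h0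
    · simp
    · exact absurd (Finset.mem_filter.mpr ⟨Finset.mem_range.mpr hn, Nat.mem_smoothNumbers_of_lt h0 hn⟩) hn2
  rw [h3, ← Finset.sum_subtype_eq_sum_filter]
  exact sum_le_hasSum _ (fun i _ => abs_nonneg _) h2

noncomputable def KS : ℝ := ∑' n, kk S n
noncomputable def KA : ℝ := ∑' n, |kk S n|

lemma hasProd_sp : HasProd (fun p : Nat.Primes => sp S p) (KS S) :=
  (kk_mult S).eulerProduct_hasProd (summable_abs_kk S)

lemma hasProd_tp : HasProd (fun p : Nat.Primes => tp S p) (KA S) :=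
  EulerProduct.eulerProduct_hasProd (f := fun n => |kk S n|) (by simp [kk_one])
    (fun h => abs_kk_coprime S h) (by simpa using summable_abs_kk S) (by simp)

lemma KS_lower : Real.exp (-(c2 g * Z2)) ≤ KS S := by
  refine ge_of_tendsto' (hasProd_sp S) ?_
  intro s
  calc Real.exp (-(c2 g * Z2)) ≤ Real.exp (∑ p ∈ s, -(c2 g / ((p:ℕ):ℝ)^2)) := by
        rw [Real.exp_le_exp, Finset.sum_neg_distrib, neg_le_neg_iff]
        calc _ = c2 g * ∑ p ∈ s, 1 / ((p:ℕ):ℝ)^2 := by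
              rw [Finset.mul_sum]; apply Finset.sum_congr rfl; intros; ring
          _ ≤ _ := mul_le_mul_of_nonneg_left (sum_inv_sq_primes_le s) (c2_nonneg g)
    _ = ∏ p ∈ s, Real.exp (-(c2 g / ((p:ℕ):ℝ)^2)) := Real.exp_sum _ _
    _ ≤ _ := Finset.prod_le_prod (fun _ _ => (Real.exp_pos _).le) (fun p _ => sp_lower S p.2)

lemma KS_pos : 0 < KS S := (Real.exp_pos _).trans_le (KS_lower S)

lemma KA_nonneg : 0 ≤ KA S := tsum_nonneg fun _ => abs_nonneg _

lemma KA_le : KA S ≤ KS S * Real.exp (c3 g * Z2) := by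
  refine le_of_tendsto_of_tendsto' (hasProd_tp S) ((hasProd_sp S).mul_const (Real.exp (c3 g * Z2))) ?_
  intro s
  calc ∏ p ∈ s, tp S p ≤ ∏ p ∈ s, (sp S p * Real.exp (c3 g / ((p:ℕ):ℝ)^2)) :=
        Finset.prod_le_prod (fun _ _ => tsum_nonneg fun _ => abs_nonneg _) (fun p _ => tp_le_sp S p.2)
    _ = (∏ p ∈ s, sp S p) * Real.exp (c3 g * ∑ p ∈ s, 1 / ((p:ℕ):ℝ)^2) := by
        rw [Finset.prod_mul_distrib, ← Real.exp_sum, Finset.mul_sum]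
        congr 2
        apply Finset.sum_congr rfl; intros; ring
    _ ≤ _ := by
        have : 0 ≤ ∏ p ∈ s, sp S p := Finset.prod_nonneg fun p _ => (sp_pos S p.2).le
        have h2 := mul_le_mul_of_nonneg_left (sum_inv_sq_primes_le s) (c3_nonneg g)
        gcongr

lemma sum_val_le {p : ℕ} (hp : p.Prime) (M : ℕ) :
    ∑ b ∈ Finset.Ioc 0 M, (b.factorization p : ℝ) * |kk S b| ≤ bp S p * KA S := by
  set φ : ℕ → ℕ × ℕ := fun b => (b.factorization p, b / p ^ b.factorization p) with hφ
  set h : ℕ × ℕ → ℝ := fun x => (x.1 : ℝ) * |kk S (p ^ x.1)| * |kk S x.2| with hh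
  have hh0 : ∀ x, 0 ≤ h x := fun x => by simp only [hh]; positivity
  have e1 : ∀ b ∈ Finset.Ioc 0 M, (b.factorization p : ℝ) * |kk S b| = h (φ b) := by
    intro b hb
    rw [Finset.mem_Ioc] at hb
    simp only [hh, hφ]
    rw [mul_assoc, ← abs_kk_coprime S, Nat.ordProj_mul_ordCompl_eq_self]
    exact (Nat.coprime_ordCompl hp (by omega)).pow_left _
  rw [Finset.sum_congr rfl e1]
  have hinj : Set.InjOn φ (Finset.Ioc 0 M) := by
    intro b _ c _ hbc
    simp only [hφ, Prod.mk.injEq] at hbc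
    have h1 := Nat.ordProj_mul_ordCompl_eq_self b p
    have h2 := Nat.ordProj_mul_ordCompl_eq_self c p
    rw [← h1, ← h2, hbc.2, hbc.1]
  rw [← Finset.sum_image (f := h) hinj]
  calc ∑ x ∈ (Finset.Ioc 0 M).image φ, h x ≤ ∑ x ∈ Finset.range (M+1) ×ˢ Finset.Ioc 0 M, h x := by
        apply Finset.sum_le_sum_of_subset_of_nonneg
        · intro x hx
          rw [Finset.mem_image] at hx
          obtain ⟨b, hb, rfl⟩ := hx
          rw [Finset.mem_Ioc] at hb
          simp only [hφ, Finset.mem_product, Finset.mem_range, Finset.mem_Ioc]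
          have h1 := Nat.factorization_lt (n := b) p (by omega)
          refine ⟨by omega, Nat.ordCompl_pos p (by omega), (Nat.div_le_self _ _).trans hb.2⟩
        · intro x _ _; exact hh0 x
    _ = (∑ j ∈ Finset.range (M+1), (j : ℝ) * |kk S (p ^ j)|) * ∑ m ∈ Finset.Ioc 0 M, |kk S m| := by
        rw [Finset.sum_mul_sum, Finset.sum_product]
    _ ≤ _ := by
        apply mul_le_mul
        · exact (jk_summable S hp).sum_le_tsum _ fun j _ => by positivity
        · exact (summable_abs_kk S).sum_le_tsum _ fun j _ => abs_nonneg _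
        · exact Finset.sum_nonneg fun j _ => abs_nonneg _
        · exact tsum_nonneg fun j => by positivity

noncomputable def BB : ℝ := g * PE S.E + c1 g * cLog

lemma BB_nonneg : 0 ≤ BB S := by
  have h1 := PE_nonneg S.E
  have h2 := c1_nonneg g
  have h3 := cLog_nonneg
  unfold BB; positivity

lemma sum_klog_le (M : ℕ) : ∑ b ∈ Finset.Ioc 0 M, |kk S b| * Real.log b ≤ KA S * BB S := by
  have e : ∀ b ∈ Finset.Ioc 0 M, |kk S b| * Real.log b =
      ∑ p ∈ Nat.primesLE M, Real.log p * ((b.factorization p : ℝ) * |kk S b|) := by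
    intro b hb
    rw [Finset.mem_Ioc] at hb
    rw [Real.log_nat_eq_sum_factorization, Finsupp.sum, Nat.support_factorization, Finset.mul_sum]
    have hsub : b.primeFactors ⊆ Nat.primesLE M := by
      intro p hp
      rw [Nat.mem_primesLE]
      exact ⟨(Nat.le_of_mem_primeFactors hp).trans hb.2, Nat.prime_of_mem_primeFactors hp⟩
    rw [← Finset.sum_subset hsub]
    · apply Finset.sum_congr rfl; intros; ring
    · intro p _ hp
      rw [← Nat.support_factorization, Finsupp.notMem_support_iff] at hp
      rw [hp]; simp
  rw [Finset.sum_congr rfl e, Finset.sum_comm]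
  have hA := KA_nonneg S
  calc _ ≤ ∑ p ∈ Nat.primesLE M, Real.log p * (((if p ∣ S.E then (g:ℝ) / p else 0) + c1 g / (p:ℝ)^2) * KA S) := by
        apply Finset.sum_le_sum
        intro p hp
        have hp' := (Nat.mem_primesLE.mp hp).2
        have hl := Real.log_natCast_nonneg p
        rw [← Finset.mul_sum]
        apply mul_le_mul_of_nonneg_left _ hl
        refine (sum_val_le S hp' M).trans ?_
        apply mul_le_mul_of_nonneg_right _ hA
        have := bp_le S hp'
        have := kk_prime_le S hp'
        linarith
    _ = KA S * (g * (∑ p ∈ Nat.primesLE M, if p ∣ S.E then Real.log p / p else 0) + c1 g * ∑ p ∈ Nat.primesLE M, Real.log p / (p:ℝ)^2) := by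
        rw [Finset.mul_sum, Finset.mul_sum, ← Finset.sum_add_distrib, Finset.mul_sum]
        apply Finset.sum_congr rfl
        intro p _
        split_ifs <;> ring
    _ ≤ _ := by
        apply mul_le_mul_of_nonneg_left _ hA
        unfold BB
        apply add_le_add
        · apply mul_le_mul_of_nonneg_left _ (by positivity)
          rw [← Finset.sum_filter]
          unfold PE
          apply Finset.sum_le_sum_of_subset_of_nonneg
          · intro p hp
            rw [Finset.mem_filter, Nat.mem_primesLE] at hp
            rw [Nat.mem_primeFactors]
            exact ⟨hp.1.2, hp.2, by have := S.hE; omega⟩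
          · intro p _ _
            have := Real.log_natCast_nonneg p
            positivity
        · exact mul_le_mul_of_nonneg_left (sum_log_div_sq_le _) (c1_nonneg g)

noncomputable def FF (D : ℕ) : ℝ := ∑ n ∈ Finset.Ioc 0 D, ff S n
noncomputable def TF (D : ℕ) : ℝ := ∑ n ∈ Finset.Ioc 0 D, ff S n * posLog ((D:ℝ) / n)

lemma FF_nonneg (D : ℕ) : 0 ≤ FF S D := Finset.sum_nonneg fun n _ => ff_nonneg S n

lemma FF_ge_one {D : ℕ} (hD : 1 ≤ D) : 1 ≤ FF S D := by
  unfold FF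
  rw [← ff_one S]
  exact Finset.single_le_sum (f := fun n => ff S n) (fun n _ => ff_nonneg S n) (by simp; omega)

lemma H_bounds {D M : ℕ} (hD : 1 ≤ D) (hM : D ≤ M) {b : ℕ} (hb : 0 < b) :
    ∑ a ∈ Finset.Ioc 0 M, ff S a * posLog ((D:ℝ) / (b * a : ℕ)) ≤ TF S D ∧
    TF S D - FF S D * Real.log b ≤ ∑ a ∈ Finset.Ioc 0 M, ff S a * posLog ((D:ℝ) / (b * a : ℕ)) := by
  have hD' : (0:ℝ) < D := by exact_mod_cast hD
  have e : ∑ a ∈ Finset.Ioc 0 M, ff S a * posLog ((D:ℝ) / (b * a : ℕ)) =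
      ∑ a ∈ Finset.Ioc 0 D, ff S a * posLog ((D:ℝ) / (b * a : ℕ)) := by
    symm
    apply Finset.sum_subset
    · exact Finset.Ioc_subset_Ioc le_rfl hM
    · intro a ha ha2
      rw [Finset.mem_Ioc] at ha ha2
      rw [posLog_eq_zero_of_lt hD' (by exact_mod_cast (by nlinarith [show D < a by omega] : D ≤ b * a)), mul_zero]
  rw [e]
  constructor
  · unfold TF
    apply Finset.sum_le_sum
    intro a ha
    rw [Finset.mem_Ioc] at ha
    apply mul_le_mul_of_nonneg_left _ (ff_nonneg S a)
    exact posLog_antitone _ hD'.le ha.1 (by nlinarith)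
  · unfold TF FF
    rw [Finset.sum_mul, ← Finset.sum_sub_distrib]
    apply Finset.sum_le_sum
    intro a ha
    rw [Finset.mem_Ioc] at ha
    rw [← mul_sub]
    apply mul_le_mul_of_nonneg_left _ (ff_nonneg S a)
    have := posLog_step (D:ℝ) hD' ha.1 hb
    rw [mul_comm b a]; push_cast; exact this

lemma Ttt_le {D M : ℕ} (hD : 1 ≤ D) (hM : D ≤ M) :
    ∑ n ∈ Finset.Ioc 0 M, tt g n * posLog ((D:ℝ) / n) ≤
      (∑ b ∈ Finset.Ioc 0 M, kk S b) * TF S D + KA S * BB S * FF S D := by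
  have hD' : (0:ℝ) < D := by exact_mod_cast hD
  rw [← kk_mul_ff S, conv_sum (kk S) (ff S) (fun n => posLog ((D:ℝ) / n)) M
    (fun n hn => posLog_eq_zero_of_lt hD' (by exact_mod_cast (by omega : D ≤ n)))]
  have h1 : ∀ b ∈ Finset.Ioc 0 M, kk S b * ∑ a ∈ Finset.Ioc 0 M, ff S a * posLog ((D:ℝ) / (b * a : ℕ)) ≤
      kk S b * TF S D + (|kk S b| * Real.log b) * FF S D := by
    intro b hb
    rw [Finset.mem_Ioc] at hb
    obtain ⟨u1, u2⟩ := H_bounds S hD hM hb.1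
    set H := ∑ a ∈ Finset.Ioc 0 M, ff S a * posLog ((D:ℝ) / (b * a : ℕ))
    have hl := Real.log_natCast_nonneg b
    have hF := FF_nonneg S D
    have hlF := mul_nonneg hF hl
    rcases le_total 0 (kk S b) with hk | hk
    · rw [abs_of_nonneg hk]
      nlinarith [mul_le_mul_of_nonneg_left u1 hk, mul_nonneg hk hlF]
    · rw [abs_of_nonpos hk]
      nlinarith [mul_le_mul_of_nonneg_left u2 (neg_nonneg.mpr hk)]
  refine (Finset.sum_le_sum h1).trans ?_
  rw [Finset.sum_add_distrib, ← Finset.sum_mul, ← Finset.sum_mul]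
  have := mul_le_mul_of_nonneg_right (sum_klog_le S M) (FF_nonneg S D)
  linarith

lemma main_T {D : ℕ} (hD : 1 ≤ D) :
    Real.log D ^ (g + 1) / (g + 1).factorial ≤ KS S * TF S D + KA S * BB S * FF S D := by
  have hD' : (0:ℝ) < D := by exact_mod_cast hD
  have hsum : HasSum (fun n => kk S n) (KS S) := (summable_abs_kk S).of_abs.hasSum
  have ht := (hsum.tendsto_sum_nat.comp (Filter.tendsto_add_atTop_nat 1)).mul_const (TF S D)
  have ht2 := ht.add_const (KA S * BB S * FF S D)
  refine ge_of_tendsto ht2 ?_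
  filter_upwards [Filter.eventually_ge_atTop D] with M hM
  have h1 := T_lower g (D:ℝ) hD' M (by exact_mod_cast hM)
  rw [log_of_nat_eq_posLog] at h1
  refine h1.trans ((Ttt_le S hD hM).trans (le_of_eq ?_))
  congr 2
  simp only [Function.comp]
  rw [Finset.sum_range_succ', ArithmeticFunction.map_zero, add_zero, Finset.range_eq_Ico, Finset.sum_Ico_add' (fun n => kk S n) 0 M 1]
  apply Finset.sum_congr _ (fun _ _ => rfl)
  ext n; simp; omega

/-- `log p · f p` on primes. -/
noncomputable def uf : ArithmeticFunction ℝ :=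
  ⟨fun n => if n.Prime then Real.log n * ff S n else 0, by simp⟩

lemma uf_apply (n : ℕ) : uf S n = if n.Prime then Real.log n * ff S n else 0 := rfl

lemma ff_mul_uf_le (n : ℕ) : (ff S * uf S) n ≤ ff S n * Real.log n := by
  rw [mul_comm, ArithmeticFunction.mul_apply]
  calc _ ≤ ∑ x ∈ n.divisorsAntidiagonal, ff S n * ArithmeticFunction.vonMangoldt x.1 := by
        apply Finset.sum_le_sum
        intro x hx
        rw [Nat.mem_divisorsAntidiagonal] at hx
        have e : ff S n = ff S x.1 * ff S x.2 := by rw [← ff_mul, hx.1]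
        rw [uf_apply, e]
        have h1 := ff_nonneg S x.1
        have h2 := ff_nonneg S x.2
        split_ifs with hp
        · rw [ArithmeticFunction.vonMangoldt_apply_prime hp]; apply le_of_eq; ring
        · have := ArithmeticFunction.vonMangoldt_nonneg (n := x.1)
          rw [zero_mul]; positivity
    _ = _ := by
        rw [← Finset.mul_sum, Nat.sum_divisorsAntidiagonal (fun x _ => ArithmeticFunction.vonMangoldt x),
          ArithmeticFunction.vonMangoldt_sum]

noncomputable def LL : ℝ := g * (Real.log 2 + 1 + 2 * cLog + PE S.E)

lemma LL_nonneg : 0 ≤ LL S := by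
  have h1 := PE_nonneg S.E
  have h3 := cLog_nonneg
  have := Real.log_nonneg (show (1:ℝ) ≤ 2 by norm_num)
  unfold LL; positivity

lemma inner_lower {D a : ℕ} (ha : 0 < a) (haD : a ≤ D) :
    g * posLog ((D:ℝ) / a) - LL S ≤ ∑ b ∈ Finset.Ioc 0 D, uf S b * (if a * b ≤ D then 1 else 0) := by
  have ha' : (0:ℝ) < a := by exact_mod_cast ha
  have haD' : (a:ℝ) ≤ D := by exact_mod_cast haD
  set N := D / a with hN
  have hN1 : 1 ≤ N := (Nat.one_le_div_iff ha).mpr haD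
  have e : ∑ b ∈ Finset.Ioc 0 D, uf S b * (if a * b ≤ D then 1 else 0) =
      ∑ p ∈ Nat.primesLE N, Real.log p * ((S.ρ p : ℝ) / p) := by
    simp_rw [mul_ite, mul_one, mul_zero, uf_apply]
    rw [← Finset.sum_filter, ← Finset.sum_filter, Finset.filter_filter]
    apply Finset.sum_congr
    · ext p
      simp only [Finset.mem_filter, Finset.mem_Ioc, Nat.mem_primesLE, hN, Nat.le_div_iff_mul_le ha]
      constructor
      · rintro ⟨_, h1, h2⟩; exact ⟨by linarith, h2⟩
      · rintro ⟨h1, h2⟩; exact ⟨⟨h2.pos, by nlinarith⟩, by linarith, h2⟩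
    · intro p hp
      rw [ff_prime S (Nat.mem_primesLE.mp hp).2]
  rw [e]
  have h1 : g * SP N - g * PE S.E ≤ ∑ p ∈ Nat.primesLE N, Real.log p * ((S.ρ p : ℝ) / p) := by
    unfold SP
    have h2 : g * ∑ p ∈ Nat.primesLE N, Real.log p / p ≤ ∑ p ∈ Nat.primesLE N, Real.log p * ((S.ρ p : ℝ) / p) +
        g * ∑ p ∈ Nat.primesLE N with p ∣ S.E, Real.log p / p := by
      rw [Finset.sum_filter, Finset.mul_sum, Finset.mul_sum, ← Finset.sum_add_distrib]
      apply Finset.sum_le_sum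
      intro p hp
      have hp' := (Nat.mem_primesLE.mp hp).2
      have hl := Real.log_natCast_nonneg p
      split_ifs with h
      · have : 0 ≤ Real.log p * ((S.ρ p : ℝ) / p) := by positivity
        linarith
      · rw [S.heq p hp' h]; apply le_of_eq; ring
    have h3 : ∑ p ∈ Nat.primesLE N with p ∣ S.E, Real.log p / p ≤ PE S.E := by
      unfold PE
      apply Finset.sum_le_sum_of_subset_of_nonneg
      · intro p hp
        rw [Finset.mem_filter, Nat.mem_primesLE] at hp
        rw [Nat.mem_primeFactors]
        exact ⟨hp.1.2, hp.2, by have := S.hE; omega⟩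
      · intro p _ _
        have := Real.log_natCast_nonneg p
        positivity
    have h4 := mul_le_mul_of_nonneg_left h3 (Nat.cast_nonneg g : (0:ℝ) ≤ g)
    linarith
  refine le_trans ?_ h1
  have h2 := SP_lower N hN1
  have h3 : posLog ((D:ℝ) / a) ≤ Real.log N + Real.log 2 := by
    rw [posLog_eq_log (by rw [abs_of_nonneg (by positivity), le_div_iff₀ ha']; linarith)]
    rw [← Real.log_mul (by positivity) (by norm_num)]
    apply Real.log_le_log (div_pos (ha'.trans_le haD') ha')
    have h5 := Nat.lt_floor_add_one ((D:ℝ)/a)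
    rw [Nat.floor_div_eq_div] at h5
    have : (1:ℝ) ≤ N := by exact_mod_cast hN1
    linarith
  unfold LL
  have h4 := mul_le_mul_of_nonneg_left (show posLog ((D:ℝ) / a) - (Real.log 2 + 1 + 2 * cLog) ≤ SP N by linarith) (Nat.cast_nonneg g : (0:ℝ) ≤ g)
  linarith

lemma FF_log {D : ℕ} (hD : 1 ≤ D) : ((g:ℝ) + 1) * TF S D ≤ FF S D * (Real.log D + LL S) := by
  have hD' : (0:ℝ) < D := by exact_mod_cast hD
  have h1 : ∑ n ∈ Finset.Ioc 0 D, ff S n * Real.log n = FF S D * Real.log D - TF S D := by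
    unfold FF TF
    rw [Finset.sum_mul, ← Finset.sum_sub_distrib]
    apply Finset.sum_congr rfl
    intro n hn
    rw [Finset.mem_Ioc] at hn
    have hn' : (0:ℝ) < n := by exact_mod_cast hn.1
    have hnD : (n:ℝ) ≤ D := by exact_mod_cast hn.2
    rw [posLog_eq_log (by rw [abs_of_nonneg (by positivity), le_div_iff₀ hn']; linarith),
      Real.log_div (by positivity) (by positivity)]
    ring
  have h2 := conv_sum (ff S) (uf S) (fun n => if n ≤ D then 1 else 0) D (fun n hn => if_neg (by omega))
  have h3 : ∑ n ∈ Finset.Ioc 0 D, (ff S * uf S) n * (if n ≤ D then 1 else 0) ≤ ∑ n ∈ Finset.Ioc 0 D, ff S n * Real.log n := by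
    apply Finset.sum_le_sum
    intro n hn
    rw [if_pos (Finset.mem_Ioc.mp hn).2, mul_one]
    exact ff_mul_uf_le S n
  have h4 : g * TF S D - LL S * FF S D ≤ ∑ a ∈ Finset.Ioc 0 D, ff S a * ∑ b ∈ Finset.Ioc 0 D, uf S b * (if a * b ≤ D then 1 else 0) := by
    unfold TF FF
    rw [Finset.mul_sum, Finset.mul_sum, ← Finset.sum_sub_distrib]
    apply Finset.sum_le_sum
    intro a ha
    rw [Finset.mem_Ioc] at ha
    have := mul_le_mul_of_nonneg_left (inner_lower S ha.1 ha.2) (ff_nonneg S a)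
    linarith
  linarith

lemma F_main {D : ℕ} (hD : 1 ≤ D) : Real.log D ^ (g+1) / g.factorial ≤
    KS S * FF S D * (Real.log D + LL S + (g+1) * Real.exp (c3 g * Z2) * BB S) := by
  have h1 := main_T S hD
  have h2 := FF_log S hD
  have h3 := KA_le S
  have hB := BB_nonneg S
  have hF := FF_nonneg S D
  have hK := KS_pos S
  have e : Real.log D ^ (g+1) / g.factorial = (g+1) * (Real.log D ^ (g + 1) / (g + 1).factorial) := by
    rw [Nat.factorial_succ]; push_cast; field_simp
  rw [e]
  calc _ ≤ ((g:ℝ)+1) * (KS S * TF S D + KS S * Real.exp (c3 g * Z2) * BB S * FF S D) := by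
        apply mul_le_mul_of_nonneg_left _ (by positivity)
        refine h1.trans ?_
        gcongr
    _ = KS S * (((g:ℝ)+1) * TF S D) + ((g:ℝ)+1) * (KS S * Real.exp (c3 g * Z2) * BB S * FF S D) := by ring
    _ ≤ KS S * (FF S D * (Real.log D + LL S)) + ((g:ℝ)+1) * (KS S * Real.exp (c3 g * Z2) * BB S * FF S D) := by gcongr
    _ = _ := by ring

lemma loglog_pos {x : ℝ} (hx : 1 ≤ x) : 0 < Real.log (Real.log (3 * x)) := by
  apply Real.log_pos
  exact one_lt_log_three.trans_le (Real.log_le_log (by norm_num) (by linarith))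

theorem F_final (g : ℕ) : ∃ C : ℝ, 0 < C ∧ ∀ S : Dat g, ∀ D : ℕ, 1 ≤ D →
    Real.log D ^ (g+1) / g.factorial ≤
      KS S * FF S D * (Real.log D + C * (1 + Real.log (Real.log (3 * S.E)))) := by
  set G := Real.exp (c3 g * Z2) with hG
  set K1 := (g:ℝ) * (Real.log 2 + 1 + 2 * cLog + (Real.log 4 + 1)) + (g+1) * G * (g * (Real.log 4 + 1) + c1 g * cLog) with hK1
  set K2 := (g:ℝ) + (g+1) * G * g with hK2
  have hc := cLog_nonneg
  have hl2 := Real.log_nonneg (show (1:ℝ) ≤ 2 by norm_num)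
  have hl4 := Real.log_nonneg (show (1:ℝ) ≤ 4 by norm_num)
  have hc1 := c1_nonneg g
  have hG0 : 0 < G := Real.exp_pos _
  have hK10 : 0 ≤ K1 := by rw [hK1]; positivity
  have hK20 : 0 ≤ K2 := by rw [hK2]; positivity
  refine ⟨K1 + K2 + 1, by positivity, ?_⟩
  intro S D hD
  refine (F_main S hD).trans ?_
  have hE : (1:ℝ) ≤ S.E := by exact_mod_cast S.hE
  have hll := loglog_pos hE
  have hPE := PE_le S.E S.hE
  set P := PE S.E with hP
  set ll := Real.log (Real.log (3 * S.E)) with hlld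
  have hF := FF_nonneg S D
  have hK := KS_pos S
  apply mul_le_mul_of_nonneg_left _ (by positivity)
  have : LL S + (g+1) * G * BB S ≤ K1 + K2 * ll := by
    unfold LL BB
    rw [← hP]
    calc _ ≤ (g:ℝ) * (Real.log 2 + 1 + 2 * cLog + (ll + (Real.log 4 + 1))) + (g+1) * G * (g * (ll + (Real.log 4 + 1)) + c1 g * cLog) := by gcongr
      _ = _ := by rw [hK1, hK2]; ring
  nlinarith [mul_nonneg hK10 hll.le]

end SieveArith

namespace SieveArith
open ArithmeticFunction

variable {g : ℕ} (S : Dat g)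

/-- `ff` as a monoid hom. -/
noncomputable def ffHom : ℕ →* ℝ where
  toFun := ff S
  map_one' := ff_one S
  map_mul' := ff_mul S

lemma ffHom_apply (n : ℕ) : ffHom S n = ff S n := rfl

lemma ff_prime_lt {p : ℕ} (hp : p.Prime) : ff S p < 1 := by
  rw [ff_prime S hp, div_lt_one (by exact_mod_cast hp.pos)]
  exact_mod_cast S.hlt p hp

lemma ff_fiber_sum (A : Finset ℕ) {l : ℕ} (hl : Squarefree l)
    (hA : ∀ n ∈ A, n ≠ 0 ∧ n.primeFactors = l.primeFactors) :
    ∑ n ∈ A, ff S n ≤ ff S l * ∏ p ∈ l.primeFactors, (1 - ff S p)⁻¹ := by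
  have h0 : ∀ {p : ℕ}, p.Prime → ‖ffHom S p‖ < 1 := by
    intro p hp
    rw [ffHom_apply, Real.norm_of_nonneg (ff_nonneg S p)]
    exact ff_prime_lt S hp
  have hs := (EulerProduct.summable_and_hasSum_factoredNumbers_prod_filter_prime_geometric h0
    l.primeFactors).2
  have hfil : l.primeFactors.filter (fun p => p.Prime) = l.primeFactors :=
    Finset.filter_true_of_mem fun p hp => Nat.prime_of_mem_primeFactors hp
  rw [hfil] at hs
  have hs2 : HasSum ((Nat.factoredNumbers l.primeFactors).indicator (fun m => ff S m))
      (∏ p ∈ l.primeFactors, (1 - ff S p)⁻¹) :=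
    (hasSum_subtype_iff_indicator (f := fun m => ff S m)).1 hs
  have hdvd : ∀ n ∈ A, l ∣ n := by
    intro n hn
    rw [← Nat.prod_primeFactors_of_squarefree hl, ← (hA n hn).2]
    exact Nat.prod_primeFactors_dvd n
  have hl0 : 0 < l := Nat.pos_of_ne_zero hl.ne_zero
  have hinj : Set.InjOn (fun n => n / l) (A : Set ℕ) := by
    intro m hm n hn h
    have h1 := Nat.div_mul_cancel (hdvd m hm)
    have h2 := Nat.div_mul_cancel (hdvd n hn)
    simp only at h
    rw [← h1, ← h2, h]
  have hmem : ∀ n ∈ A, n / l ∈ Nat.factoredNumbers l.primeFactors := by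
    intro n hn
    rw [Nat.mem_factoredNumbers_iff_primeFactors_subset]
    have hne : n / l ≠ 0 := by
      intro h
      have h1 := Nat.div_mul_cancel (hdvd n hn)
      rw [h] at h1
      exact (hA n hn).1 (by simpa using h1.symm)
    refine ⟨hne, ?_⟩
    rw [← (hA n hn).2]
    exact Nat.primeFactors_mono (Nat.div_dvd_of_dvd (hdvd n hn)) (hA n hn).1
  calc ∑ n ∈ A, ff S n = ∑ n ∈ A, ff S l * ff S (n / l) := by
        apply Finset.sum_congr rfl
        intro n hn
        rw [← ff_mul, Nat.mul_div_cancel' (hdvd n hn)]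
    _ = ff S l * ∑ m ∈ A.image (fun n => n / l), ff S m := by
        rw [Finset.sum_image hinj, Finset.mul_sum]
    _ = ff S l * ∑ m ∈ A.image (fun n => n / l),
          (Nat.factoredNumbers l.primeFactors).indicator (fun m => ff S m) m := by
        congr 1
        apply Finset.sum_congr rfl
        intro m hm
        obtain ⟨n, hn, rfl⟩ := Finset.mem_image.1 hm
        rw [Set.indicator_of_mem (hmem n hn)]
    _ ≤ _ := by
        apply mul_le_mul_of_nonneg_left _ (ff_nonneg S l)
        apply sum_le_hasSum _ _ hs2
        intro i _
        exact Set.indicator_nonneg (fun m _ => ff_nonneg S m) i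

lemma FF_le_GG (s : BoundingSieve) (D : ℕ)
    (hP : ∀ p, p.Prime → (p ∣ s.prodPrimes ↔ p ≤ D ∧ S.ρ p ≠ 0))
    (hnu : ∀ p, p.Prime → s.nu p = (S.ρ p : ℝ) / p) : FF S D ≤ SelbergAux.GG s D := by
  unfold FF SelbergAux.GG
  rw [← Finset.sum_filter_ne_zero]
  have hmaps : ∀ n ∈ (Finset.Ioc 0 D).filter (fun n => ff S n ≠ 0),
      (∏ p ∈ n.primeFactors, p) ∈ s.prodPrimes.divisors.filter (fun l => l ≤ D) := by
    intro n hn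
    simp only [Finset.mem_filter, Finset.mem_Ioc] at hn
    obtain ⟨⟨hn0, hnD⟩, hf⟩ := hn
    simp only [Finset.mem_filter, Nat.mem_divisors]
    refine ⟨⟨?_, s.prodPrimes_squarefree.ne_zero⟩, (Nat.le_of_dvd hn0 (Nat.prod_primeFactors_dvd n)).trans hnD⟩
    apply Finset.prod_primes_dvd
    · intro p hp
      exact (Nat.prime_of_mem_primeFactors hp).prime
    · intro p hp
      have hpp := Nat.prime_of_mem_primeFactors hp
      have hpd := Nat.dvd_of_mem_primeFactors hp
      rw [hP p hpp]
      refine ⟨(Nat.le_of_dvd hn0 hpd).trans hnD, ?_⟩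
      intro h0
      obtain ⟨m, rfl⟩ := hpd
      apply hf
      rw [ff_mul, ff_prime S hpp, h0]
      simp
  rw [← Finset.sum_fiberwise_of_maps_to hmaps]
  apply Finset.sum_le_sum
  intro l hl
  simp only [Finset.mem_filter, Nat.mem_divisors] at hl
  have hsq : Squarefree l := s.prodPrimes_squarefree.squarefree_of_dvd hl.1.1
  refine (ff_fiber_sum S _ hsq ?_).trans (le_of_eq ?_)
  · intro n hn
    simp only [Finset.mem_filter, Finset.mem_Ioc] at hn
    refine ⟨hn.1.1.1.ne', ?_⟩
    rw [← hn.2, Nat.primeFactors_prod]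
    intro p hp
    exact Nat.prime_of_mem_primeFactors hp
  · rw [BoundingSieve.selbergTerms_apply, ← BoundingSieve.prod_primeFactors_nu hl.1.1]
    have h1 : ff S l = ∏ p ∈ l.primeFactors, s.nu p := by
      conv_lhs => rw [← Nat.prod_primeFactors_of_squarefree hsq]
      have := map_prod (ffHom S) (fun p => p) l.primeFactors
      simp only [ffHom_apply] at this
      rw [this]
      apply Finset.prod_congr rfl
      intro p hp
      have hpp := Nat.prime_of_mem_primeFactors hp
      rw [hnu p hpp, ff_prime S hpp]
    rw [h1]
    congr 1
    apply Finset.prod_congr rfl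
    intro p hp
    have hpp := Nat.prime_of_mem_primeFactors hp
    rw [hnu p hpp, ff_prime S hpp]

end SieveArith

namespace SieveAsm
open SieveArith

variable {g : ℕ} (a b : Fin g → ℤ)

/-- The local data attached to the linear forms. -/
noncomputable def datOf (hE : sieveE a b ≠ 0) (hρ : ∀ p : ℕ, p.Prime → sieveRho a b p < p) : Dat g where
  ρ := sieveRho a b
  E := (sieveE a b).natAbs
  hE := Int.natAbs_pos.mpr hE
  hle := fun p hp => rho_le a b hp (hρ p hp)
  hlt := hρ
  heq := fun p hp h => rho_eq a b hp (hρ p hp) (by rwa [Int.natCast_dvd])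

/-- The density function. -/
noncomputable def nuA : ArithmeticFunction ℝ := ⟨fun d => (sieveRho a b d : ℝ) / d, by simp⟩

lemma nuA_apply (d : ℕ) : nuA a b d = (sieveRho a b d : ℝ) / d := rfl

lemma nuA_mult : (nuA a b).IsMultiplicative := by
  refine ⟨?_, ?_⟩
  · rw [nuA_apply, rho_one]; simp
  · intro m n h
    rw [nuA_apply, nuA_apply, nuA_apply, rho_mul a b h]
    push_cast
    rw [mul_div_mul_comm]

/-- Product of the sifting primes. -/
noncomputable def PP (D : ℕ) : ℕ := ∏ p ∈ (Nat.primesLE D).filter (fun p => sieveRho a b p ≠ 0), p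

lemma PP_dvd (D p : ℕ) (hp : p.Prime) : p ∣ PP a b D ↔ p ≤ D ∧ sieveRho a b p ≠ 0 := by
  unfold PP
  rw [hp.prime.dvd_finsetProd_iff]
  constructor
  · rintro ⟨q, hq, hpq⟩
    simp only [Finset.mem_filter, Nat.mem_primesLE] at hq
    rw [(Nat.prime_dvd_prime_iff_eq hp hq.1.2).1 hpq]
    exact ⟨hq.1.1, hq.2⟩
  · rintro ⟨h1, h2⟩
    exact ⟨p, by simp [Nat.mem_primesLE, h1, h2, hp], dvd_rfl⟩

lemma PP_squarefree (D : ℕ) : Squarefree (PP a b D) := by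
  unfold PP
  apply Finset.squarefree_prod_of_pairwise_isCoprime
  · intro p hp q hq hpq
    have hp' := hp
    have hq' := hq
    simp only [Finset.coe_filter, Set.mem_ofPred_eq, Nat.mem_primesLE] at hp' hq'
    simpa [Function.onFun, Nat.coprime_iff_isRelPrime] using (Nat.coprime_primes hp'.1.2 hq'.1.2).2 hpq
  · intro p hp
    simp only [Finset.mem_filter, Nat.mem_primesLE] at hp
    exact hp.1.2.prime.squarefree

/-- Absolute value of the product of the forms. -/
def VV (n : ℤ) : ℕ := (∏ i, (a i * n + b i)).natAbs

/-- The sieve problem. -/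
noncomputable def mkS (hρ : ∀ p : ℕ, p.Prime → sieveRho a b p < p) (y z : ℝ) (D : ℕ) : BoundingSieve where
  support := (Finset.Ioc ⌊z-y⌋ ⌊z⌋).image (VV a b)
  prodPrimes := PP a b D
  prodPrimes_squarefree := PP_squarefree a b D
  weights := fun m => (#{n ∈ Finset.Ioc ⌊z-y⌋ ⌊z⌋ | VV a b n = m} : ℕ)
  weights_nonneg := fun _ => by positivity
  totalMass := y
  nu := nuA a b
  nu_mult := nuA_mult a b
  nu_pos_of_prime := fun p hp h => by
    rw [PP_dvd a b D p hp] at h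
    rw [nuA_apply]
    have := Nat.pos_of_ne_zero h.2
    have := hp.pos
    positivity
  nu_lt_one_of_prime := fun p hp _ => by
    rw [nuA_apply, div_lt_one (by exact_mod_cast hp.pos)]
    exact_mod_cast hρ p hp

lemma weight_sum (I : Finset ℤ) (V : ℤ → ℕ) (q : ℕ → Prop) [DecidablePred q] :
    (∑ m ∈ I.image V, if q m then ((#{n ∈ I | V n = m} : ℕ) : ℝ) else 0) =
      (#{n ∈ I | q (V n)} : ℕ) := by
  have := Finset.sum_comp (s := I) (fun m => if q m then (1:ℝ) else 0) V
  rw [Finset.card_filter]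
  push_cast
  rw [this]
  apply Finset.sum_congr rfl
  intro m _
  split_ifs <;> simp

variable (hρ : ∀ p : ℕ, p.Prime → sieveRho a b p < p)

lemma rem_le {y z : ℝ} (hy : 0 ≤ y) (D d : ℕ) (hd : 0 < d) :
    |(mkS a b hρ y z D).rem d| ≤ sieveRho a b d := by
  have h := count_dvd a b y z hy d hd
  unfold BoundingSieve.rem BoundingSieve.multSum
  have h2 := weight_sum (Finset.Ioc ⌊z-y⌋ ⌊z⌋) (VV a b) (fun m => d ∣ m)
  simp only [mkS, nuA_apply]
  rw [h2]
  simp only [VV, ← Int.natCast_dvd]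
  exact h

lemma sifted_eq {y z : ℝ} (D : ℕ) : (mkS a b hρ y z D).siftedSum =
    (#{n ∈ Finset.Ioc ⌊z-y⌋ ⌊z⌋ | (PP a b D).Coprime (VV a b n)} : ℕ) := by
  unfold BoundingSieve.siftedSum
  exact weight_sum (Finset.Ioc ⌊z-y⌋ ⌊z⌋) (VV a b) (fun m => (PP a b D).Coprime m)

lemma rho_prod {D d : ℕ} (hd : d ∣ PP a b D) :
    (sieveRho a b d : ℝ) = ∏ p ∈ d.primeFactors, (sieveRho a b p : ℝ) := by
  have hsq := (PP_squarefree a b D).squarefree_of_dvd hd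
  have h1 := (nuA_mult a b).map_prod_of_subset_primeFactors d d.primeFactors subset_rfl
  rw [Nat.prod_primeFactors_of_squarefree hsq] at h1
  simp only [nuA_apply, Finset.prod_div_distrib] at h1
  rw [← Nat.cast_prod, ← Nat.cast_prod, Nat.prod_primeFactors_of_squarefree hsq] at h1
  have hd0 : (d:ℝ) ≠ 0 := by exact_mod_cast hsq.ne_zero
  field_simp at h1
  rw [h1]; push_cast; rfl

lemma rho_lcm {D d e : ℕ} (hd : d ∣ PP a b D) (he : e ∣ PP a b D) :
    (sieveRho a b (d.lcm e) : ℝ) ≤ sieveRho a b d * sieveRho a b e := by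
  have hP0 := (PP_squarefree a b D).ne_zero
  have hd0 := ne_zero_of_dvd_ne_zero hP0 hd
  have he0 := ne_zero_of_dvd_ne_zero hP0 he
  have hpf : (d.lcm e).primeFactors = d.primeFactors ∪ e.primeFactors := by
    ext p
    simp only [Nat.mem_primeFactors, Finset.mem_union]
    constructor
    · rintro ⟨hp, h, _⟩
      rcases (hp.dvd_lcm).1 h with h | h
      · exact Or.inl ⟨hp, h, hd0⟩
      · exact Or.inr ⟨hp, h, he0⟩
    · rintro (⟨hp, h, _⟩ | ⟨hp, h, _⟩)
      · exact ⟨hp, h.trans (Nat.dvd_lcm_left d e), Nat.lcm_ne_zero hd0 he0⟩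
      · exact ⟨hp, h.trans (Nat.dvd_lcm_right d e), Nat.lcm_ne_zero hd0 he0⟩
  rw [rho_prod a b (Nat.lcm_dvd hd he), rho_prod a b hd, rho_prod a b he,
    hpf, ← Finset.prod_union_inter]
  apply le_mul_of_one_le_right
  · exact Finset.prod_nonneg fun _ _ => by positivity
  · have h1 : (∏ _p ∈ d.primeFactors ∩ e.primeFactors, (1:ℝ)) ≤
        ∏ p ∈ d.primeFactors ∩ e.primeFactors, (sieveRho a b p : ℝ) := ?_
    · simpa using h1
    apply Finset.prod_le_prod (fun _ _ => zero_le_one)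
    intro p hp
    rw [Finset.mem_inter] at hp
    have hpp := Nat.prime_of_mem_primeFactors hp.1
    have := ((PP_dvd a b D p hpp).1 ((Nat.dvd_of_mem_primeFactors hp.1).trans hd)).2
    exact_mod_cast Nat.pos_of_ne_zero this

lemma err_term (hρ : ∀ p : ℕ, p.Prime → sieveRho a b p < p) {D d : ℕ} (hd : d ∣ PP a b D) :
    (∏ p ∈ d.primeFactors, (1 - nuA a b p)⁻¹) * sieveRho a b d ≤ d * tt ((g+1) * g) d := by
  rw [rho_prod a b hd, ← tt_squarefree _ ((PP_squarefree a b D).squarefree_of_dvd hd),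
    ← Finset.prod_mul_distrib]
  rw [← Finset.prod_const]
  apply Finset.prod_le_prod
  · intro p hp
    have hpp := Nat.prime_of_mem_primeFactors hp
    have h1 : nuA a b p < 1 := by
      rw [nuA_apply, div_lt_one (by exact_mod_cast hpp.pos)]
      exact_mod_cast hρ p hpp
    have : 0 < 1 - nuA a b p := by linarith
    positivity
  · intro p hp
    have hpp := Nat.prime_of_mem_primeFactors hp
    have h1 := hρ p hpp
    have h2 := rho_le a b hpp h1
    have hp0 : (0:ℝ) < p := by exact_mod_cast hpp.pos
    have h3 : (sieveRho a b p : ℝ) + 1 ≤ p := by exact_mod_cast h1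
    have h4 : (sieveRho a b p : ℝ) ≤ g := by exact_mod_cast h2
    push_cast
    apply mul_le_mul _ h4 (by positivity) (by positivity)
    rw [nuA_apply]
    have h5 : 1 - (sieveRho a b p : ℝ) / p = (p - sieveRho a b p) / p := by field_simp
    rw [h5, inv_div, div_le_iff₀ (by linarith)]
    nlinarith [(Nat.cast_nonneg g : (0:ℝ) ≤ g)]

lemma err_sum (hρ : ∀ p : ℕ, p.Prime → sieveRho a b p < p) (D : ℕ) :
    ∑ d ∈ (PP a b D).divisors with d ≤ D, (∏ p ∈ d.primeFactors, (1 - nuA a b p)⁻¹) * sieveRho a b d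
      ≤ D * (1 + Real.log D) ^ ((g+1) * g) := by
  calc _ ≤ ∑ d ∈ (PP a b D).divisors with d ≤ D, (D:ℝ) * tt ((g+1)*g) d := by
        apply Finset.sum_le_sum
        intro d hd
        simp only [Finset.mem_filter, Nat.mem_divisors] at hd
        refine (err_term a b hρ hd.1.1).trans ?_
        apply mul_le_mul_of_nonneg_right _ (tt_nonneg _ _)
        exact_mod_cast hd.2
    _ ≤ ∑ d ∈ Finset.Ioc 0 D, (D:ℝ) * tt ((g+1)*g) d := by
        apply Finset.sum_le_sum_of_subset_of_nonneg
        · intro d hd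
          simp only [Finset.mem_filter, Nat.mem_divisors] at hd
          rw [Finset.mem_Ioc]
          exact ⟨Nat.pos_of_ne_zero (ne_zero_of_dvd_ne_zero hd.1.2 hd.1.1), hd.2⟩
        · intro d _ _
          exact mul_nonneg (by positivity) (tt_nonneg _ _)
    _ ≤ _ := by
        rw [← Finset.mul_sum]
        exact mul_le_mul_of_nonneg_left (sum_tt_le _ _) (by positivity)

lemma sifted_le (hE : sieveE a b ≠ 0) {y z : ℝ} (hy : 0 < y) {D : ℕ} (hD : 1 ≤ D) :
    ((#{n ∈ Finset.Ioc ⌊z-y⌋ ⌊z⌋ | (PP a b D).Coprime (VV a b n)} : ℕ) : ℝ) ≤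
      y / FF (datOf a b hE hρ) D + (D * (1 + Real.log D) ^ ((g+1) * g)) ^ 2 := by
  rw [← sifted_eq a b hρ D]
  have hP0 := (PP_squarefree a b D).ne_zero
  have h := SelbergAux.selberg_bound (s := mkS a b hρ y z D) hD (fun d => (sieveRho a b d : ℝ))
    (fun d => by positivity)
    (fun d hd => rem_le a b hρ hy.le D d (Nat.pos_of_ne_zero (ne_zero_of_dvd_ne_zero hP0 hd)))
    (fun d e hd he => rho_lcm a b hd he)
  refine h.trans ?_
  have h1 := FF_ge_one (datOf a b hE hρ) hD
  have h2 := FF_le_GG (datOf a b hE hρ) (mkS a b hρ y z D) D (fun p hp => PP_dvd a b D p hp)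
    (fun p hp => rfl)
  apply add_le_add
  · exact div_le_div_of_nonneg_left hy.le (by linarith) h2
  · apply pow_le_pow_left₀ _ (err_sum a b hρ D)
    apply Finset.sum_nonneg
    intro d hd
    apply mul_nonneg _ (by positivity)
    apply Finset.prod_nonneg
    intro p hp
    have hpp := Nat.prime_of_mem_primeFactors hp
    have h1 : nuA a b p < 1 := by
      rw [nuA_apply, div_lt_one (by exact_mod_cast hpp.pos)]
      exact_mod_cast hρ p hpp
    have : 0 < 1 - nuA a b p := by linarith
    exact (inv_pos.2 this).le

lemma card_set_eq (y z : ℝ) : Nat.card {n : ℤ | z - y < (n : ℝ) ∧ (n : ℝ) ≤ z ∧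
            ∀ i, Prime (a i * n + b i)} =
    #{n ∈ Finset.Ioc ⌊z-y⌋ ⌊z⌋ | ∀ i, Prime (a i * n + b i)} := by
  classical
  rw [← Nat.card_eq_finsetCard]
  refine Nat.card_congr (Equiv.subtypeEquivRight ?_)
  intro n
  simp [Int.floor_lt, Int.le_floor, and_assoc]

lemma count_le (hE : sieveE a b ≠ 0) {y z : ℝ} (hy : 0 < y) {D : ℕ} (hD : 1 ≤ D) :
    (Nat.card {n : ℤ | z - y < (n : ℝ) ∧ (n : ℝ) ≤ z ∧
            ∀ i, Prime (a i * n + b i)} : ℝ) ≤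
      y / FF (datOf a b hE hρ) D + (D * (1 + Real.log D) ^ ((g+1) * g)) ^ 2 + g * (2 * D + 1) := by
  classical
  rw [card_set_eq]
  have ha : ∀ i, a i ≠ 0 := by
    intro i hi
    apply hE
    unfold sieveE
    rw [Finset.prod_eq_zero (Finset.mem_univ i) hi, zero_mul]
  set I := Finset.Ioc ⌊z-y⌋ ⌊z⌋ with hI
  have hsub : I.filter (fun n => ∀ i, Prime (a i * n + b i)) ⊆
      I.filter (fun n => (PP a b D).Coprime (VV a b n)) ∪
      Finset.univ.biUnion (fun i : Fin g => I.filter (fun n => a i * n + b i ∈ Finset.Icc (-(D:ℤ)) D)) := by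
    intro n hn
    rw [Finset.mem_filter] at hn
    rw [Finset.mem_union]
    by_cases h : ∃ i, a i * n + b i ∈ Finset.Icc (-(D:ℤ)) D
    · right
      obtain ⟨i, hi⟩ := h
      rw [Finset.mem_biUnion]
      exact ⟨i, Finset.mem_univ i, Finset.mem_filter.2 ⟨hn.1, hi⟩⟩
    · left
      rw [Finset.mem_filter]
      refine ⟨hn.1, ?_⟩
      apply Nat.coprime_of_dvd
      intro p hp hpP hpV
      have hpD := ((PP_dvd a b D p hp).1 hpP).1
      unfold VV at hpV
      rw [← Int.natCast_dvd, (Nat.prime_iff_prime_int.1 hp).dvd_finsetProd_iff] at hpV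
      obtain ⟨i, _, hi⟩ := hpV
      apply h
      refine ⟨i, ?_⟩
      have hpr := Int.prime_iff_natAbs_prime.1 (hn.2 i)
      have h1 : p = (a i * n + b i).natAbs :=
        (Nat.prime_dvd_prime_iff_eq hp hpr).1 (Int.natCast_dvd.1 hi)
      rw [Finset.mem_Icc]
      omega
  have hcard := (Finset.card_le_card hsub).trans (Finset.card_union_le _ _)
  have hbi : #(Finset.univ.biUnion (fun i : Fin g => I.filter (fun n => a i * n + b i ∈ Finset.Icc (-(D:ℤ)) D)))
      ≤ g * (2 * D + 1) := by
    refine (Finset.card_biUnion_le_card_mul _ _ (2 * D + 1) ?_).trans (by simp)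
    intro i _
    calc _ ≤ #(Finset.Icc (-(D:ℤ)) D) := by
          apply Finset.card_le_card_of_injOn (fun n => a i * n + b i)
          · intro n hn
            exact (Finset.mem_filter.1 hn).2
          · intro m _ n _ hmn
            simp only [add_left_inj] at hmn
            exact mul_left_cancel₀ (ha i) hmn
      _ = 2 * D + 1 := by rw [Int.card_Icc]; omega
  have hs := sifted_le a b hρ hE (z := z) hy hD
  have h3 : ((#(I.filter (fun n => ∀ i, Prime (a i * n + b i))) : ℕ) : ℝ) ≤
      (#(I.filter (fun n => (PP a b D).Coprime (VV a b n))) : ℕ) + g * (2 * D + 1) := by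
    exact_mod_cast hcard.trans (Nat.add_le_add_left hbi _)
  refine le_trans ?_ (h3.trans (add_le_add_left hs _))
  apply le_of_eq
  congr!

lemma count_trivial {y z : ℝ} (hy : 0 < y) :
    (Nat.card {n : ℤ | z - y < (n : ℝ) ∧ (n : ℝ) ≤ z ∧
            ∀ i, Prime (a i * n + b i)} : ℝ) ≤ y + 1 := by
  classical
  rw [card_set_eq]
  have h1 : #{n ∈ Finset.Ioc ⌊z-y⌋ ⌊z⌋ | ∀ i, Prime (a i * n + b i)} ≤ (⌊z⌋ - ⌊z-y⌋).toNat := by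
    rw [← Int.card_Ioc]
    exact Finset.card_filter_le _ _
  have h2 : ⌊z-y⌋ ≤ ⌊z⌋ := Int.floor_le_floor (by linarith)
  have h3 : (((⌊z⌋ - ⌊z-y⌋).toNat : ℕ) : ℝ) = (⌊z⌋ : ℝ) - ⌊z-y⌋ := by
    have : (((⌊z⌋ - ⌊z-y⌋).toNat : ℕ) : ℤ) = ⌊z⌋ - ⌊z-y⌋ := Int.toNat_of_nonneg (by linarith)
    exact_mod_cast this
  have h4 := Int.floor_le z
  have h5 := Int.lt_floor_add_one (z - y)
  have h6 : ((#{n ∈ Finset.Ioc ⌊z-y⌋ ⌊z⌋ | ∀ i, Prime (a i * n + b i)} : ℕ) : ℝ) ≤ y + 1 := by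
    refine (Nat.cast_le.2 h1).trans ?_
    rw [h3]; linarith
  refine le_trans (le_of_eq ?_) h6
  congr!

lemma tprod_eq (hE : sieveE a b ≠ 0) :
    (∏' p : Nat.Primes,
            ((1 - ((sieveRho a b p : ℝ) - 1) / ((p : ℕ) - 1)) *
              (1 - 1 / ((p : ℕ) : ℝ)) ^ (-(g : ℤ) + 1))) = KS (datOf a b hE hρ) := by
  rw [← (hasProd_sp (datOf a b hE hρ)).tprod_eq]
  apply tprod_congr
  intro p
  have hp := p.2
  rw [sp_eq _ hp]
  have h1 : (1:ℝ) < (p:ℕ) := by exact_mod_cast hp.one_lt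
  have h2 : ((p:ℕ):ℝ) - 1 ≠ 0 := by linarith
  have h3 : ((p:ℕ):ℝ) ≠ 0 := by linarith
  have h4 : (1 - 1 / ((p : ℕ) : ℝ)) ≠ 0 := by
    rw [one_sub_div h3]; exact div_ne_zero h2 h3
  rw [zpow_add₀ h4, zpow_neg, zpow_natCast, zpow_one, inv_pow, ← one_div ((p:ℕ):ℝ)]
  have h5 : (1 - ((sieveRho a b p : ℝ) - 1) / ((p : ℕ) - 1)) * (1 - 1 / ((p : ℕ) : ℝ)) =
    1 - ((datOf a b hE hρ).ρ p : ℝ) / (p:ℕ) := by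
    change _ = 1 - (sieveRho a b p : ℝ) / (p:ℕ)
    field_simp
    ring
  rw [← h5]; ring

end SieveAsm

namespace SieveFinal
open SieveArith SieveAsm

lemma pow_le_lin (n : ℕ) {t : ℝ} (h0 : 0 ≤ t) (h1 : t ≤ 1) : (1 + t) ^ n ≤ 1 + (2 ^ n - 1) * t := by
  induction n with
  | zero => simp
  | succ k ih =>
    have h2 : (1:ℝ) ≤ 2 ^ k := one_le_pow₀ (by norm_num)
    rw [pow_succ, pow_succ]
    have h3 : t * t ≤ t := by nlinarith
    nlinarith [mul_le_mul_of_nonneg_right ih (by linarith : 0 ≤ 1 + t), mul_le_mul_of_nonneg_left h3 (by linarith : (0:ℝ) ≤ 2 ^ k - 1)]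

lemma main_ineq (g : ℕ) {l L K u Λ : ℝ} (hl : 0 < l) (hu : 0 ≤ u) (hK : 0 ≤ K) (hΛ : 0 ≤ Λ)
    (hL : l / 2 - K * u ≤ L) (hx : 4 * K * u ≤ l) :
    (L + Λ) / L ^ (g + 1) ≤ 2 ^ g / l ^ g * (1 + (2 ^ g * (4 * K * u) + 4 * (1 + 2 ^ g) * Λ) / l) := by
  set t := 4 * K * u / l with ht
  have ht0 : 0 ≤ t := by positivity
  have ht1 : t ≤ 1 := by rw [ht, div_le_one hl]; exact hx
  have htl : t * l = 4 * K * u := by rw [ht]; field_simp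
  have hL4 : l / 4 ≤ L := by linarith
  have hL0 : 0 < L := by linarith
  have hinv : 1 / L ≤ 2 / l * (1 + t) := by
    rw [div_le_iff₀ hL0]
    have h1 : l / 2 * (1 - t / 2) ≤ L := by nlinarith
    have h2 : 2 / l * (1 + t) * (l / 2 * (1 - t / 2)) = (1 + t) * (1 - t / 2) := by field_simp
    have h3 : 2 / l * (1 + t) * (l / 2 * (1 - t / 2)) ≤ 2 / l * (1 + t) * L :=
      mul_le_mul_of_nonneg_left h1 (by positivity)
    nlinarith
  have hpow : (1 / L) ^ g ≤ (2 / l) ^ g * (1 + 2 ^ g * t) := by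
    calc (1 / L) ^ g ≤ (2 / l * (1 + t)) ^ g := pow_le_pow_left₀ (by positivity) hinv g
      _ = (2 / l) ^ g * (1 + t) ^ g := mul_pow _ _ _
      _ ≤ _ := by
        apply mul_le_mul_of_nonneg_left _ (by positivity)
        have := pow_le_lin g ht0 ht1
        linarith
  have hΛL : Λ / L ≤ 4 * Λ / l := by
    rw [div_le_div_iff₀ hL0 hl]; nlinarith
  have heq : (L + Λ) / L ^ (g + 1) = (1 / L) ^ g * (1 + Λ / L) := by
    rw [pow_succ, div_pow, one_pow]; field_simp
  rw [heq]
  calc (1 / L) ^ g * (1 + Λ / L) ≤ ((2 / l) ^ g * (1 + 2 ^ g * t)) * (1 + 4 * Λ / l) :=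
        mul_le_mul hpow (by linarith) (by positivity) (by positivity)
    _ = 2 ^ g / l ^ g * (1 + 2 ^ g * t + (1 + 2 ^ g * t) * (4 * Λ / l)) := by
        rw [div_pow]; ring
    _ ≤ 2 ^ g / l ^ g * (1 + 2 ^ g * t + (1 + 2 ^ g * 1) * (4 * Λ / l)) := by
        gcongr
    _ = _ := by rw [ht]; ring

lemma exists_y0 (B : ℕ) {K : ℝ} (hK : 0 ≤ K) : ∃ y0 : ℝ, 1 < y0 ∧ ∀ y, y0 ≤ y →
    1 ≤ Real.log y ∧ Real.log y ^ B ≤ √y ∧ 4 * K * Real.log (Real.log (3 * y)) ≤ Real.log y := by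
  have e1 : ∀ᶠ y : ℝ in Filter.atTop, 1 ≤ Real.log y :=
    Real.tendsto_log_atTop.eventually_ge_atTop 1
  have e2 : ∀ᶠ y : ℝ in Filter.atTop, Real.log y ^ B ≤ √y := by
    have h := (isLittleO_pow_log_id_atTop (n := 2 * B)).bound one_pos
    filter_upwards [h, e1, Filter.eventually_ge_atTop 1] with y hy h1 hy1
    simp only [id, one_mul, Real.norm_eq_abs] at hy
    rw [abs_of_nonneg (by positivity), abs_of_nonneg (by linarith)] at hy
    apply Real.le_sqrt_of_sq_le
    rwa [← pow_mul, mul_comm B 2]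
  have e3 : ∀ᶠ y : ℝ in Filter.atTop, 4 * K * Real.log (Real.log (3 * y)) ≤ Real.log y := by
    have hc : (0:ℝ) < 1 / (8 * K + 1) := by positivity
    have h := Real.isLittleO_log_id_atTop.bound hc
    have ht : Filter.Tendsto (fun y : ℝ => Real.log (3 * y)) Filter.atTop Filter.atTop :=
      Real.tendsto_log_atTop.comp (Filter.tendsto_id.const_mul_atTop (by norm_num : (0:ℝ) < 3))
    filter_upwards [ht.eventually h, ht.eventually_ge_atTop 1, Filter.eventually_ge_atTop 3] with y hy h1 h3
    simp only [id, Real.norm_eq_abs] at hy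
    have hn : 0 ≤ Real.log (Real.log (3 * y)) := Real.log_nonneg h1
    rw [abs_of_nonneg hn, abs_of_nonneg (by linarith), one_div, inv_mul_eq_div,
      le_div_iff₀ (by positivity)] at hy
    have h4 : Real.log (3 * y) = Real.log 3 + Real.log y := Real.log_mul (by norm_num) (by linarith)
    have h5 : Real.log 3 ≤ Real.log y := Real.log_le_log (by norm_num) h3
    nlinarith
  obtain ⟨y0, h0⟩ := Filter.eventually_atTop.1 ((e1.and e2).and e3)
  refine ⟨max y0 2, lt_of_lt_of_le (by norm_num) (le_max_right _ _), ?_⟩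
  intro y hy
  obtain ⟨⟨h1, h2⟩, h3⟩ := h0 y ((le_max_left _ _).trans hy)
  exact ⟨h1, h2, h3⟩

/-- Choice of the sifting level. -/
lemma choose_D {y : ℝ} (B : ℕ) (h1 : 1 ≤ Real.log y) (hy : 1 < y) (hB : Real.log y ^ B ≤ √y) :
    ∃ D : ℕ, 1 ≤ D ∧ (D:ℝ) ^ 2 ≤ y / Real.log y ^ (2 * B) ∧
      Real.log y / 2 - B * Real.log (Real.log y) - Real.log 2 ≤ Real.log D ∧
      Real.log D ≤ Real.log y := by
  have hl : 0 < Real.log y := by linarith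
  have hy00 : 0 ≤ y := by linarith
  set x := √y / Real.log y ^ B with hx
  have hx1 : 1 ≤ x := by rw [hx, one_le_div (by positivity)]; exact hB
  have hD1 : 1 ≤ ⌊x⌋₊ := by rw [Nat.one_le_floor_iff]; exact hx1
  have hDx : (⌊x⌋₊ : ℝ) ≤ x := Nat.floor_le (by linarith)
  have hDr : (1:ℝ) ≤ ⌊x⌋₊ := by exact_mod_cast hD1
  have hlogx : Real.log x = Real.log y / 2 - B * Real.log (Real.log y) := by
    rw [hx, Real.log_div (by positivity) (by positivity), Real.log_sqrt (by linarith), Real.log_pow]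
  refine ⟨⌊x⌋₊, hD1, ?_, ?_, ?_⟩
  · calc (⌊x⌋₊ : ℝ) ^ 2 ≤ x ^ 2 := pow_le_pow_left₀ (by positivity) hDx 2
      _ = _ := by rw [hx, div_pow, Real.sq_sqrt (by linarith), ← pow_mul, mul_comm B 2]
  · rw [← hlogx, ← Real.log_div (by linarith) (by norm_num)]
    apply Real.log_le_log (by linarith)
    have := Nat.lt_floor_add_one x
    linarith
  · apply Real.log_le_log (by linarith)
    have h3 : √y ≤ y := by rw [Real.sqrt_le_left hy00]; nlinarith
    have h4 : x ≤ √y := div_le_self (Real.sqrt_nonneg y) (one_le_pow₀ h1)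
    linarith

set_option maxHeartbeats 2000000 in
theorem final (g : ℕ) : ∃ C : ℝ, 0 < C ∧ ∀ S : Dat g, ∀ y N : ℝ, 1 < y → N ≤ y + 1 →
    (∀ D : ℕ, 1 ≤ D → N ≤ y / FF S D + (D * (1 + Real.log D) ^ ((g+1) * g)) ^ 2 + g * (2 * D + 1)) →
    N ≤ 2 ^ g * (Nat.factorial g : ℝ) * KS S * (y / Real.log y ^ g) *
      (1 + C * (Real.log (Real.log (3 * y)) + Real.log (Real.log (3 * (S.E : ℝ)))) / Real.log y) := by
  obtain ⟨C2, hC2, hF⟩ := F_final g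
  set m := Real.log (Real.log 3) with hm
  have hm0 : 0 < m := by have := loglog_pos (le_refl (1:ℝ)); rwa [mul_one] at this
  set κ := (g+1) * g with hκ
  set B := κ + g + 1 with hB
  set c0 := Real.exp (-(c2 g * Z2)) with hc0
  have hc0p : 0 < c0 := Real.exp_pos _
  have hlog2 : 0 < Real.log 2 := Real.log_pos (by norm_num)
  set K := (B:ℝ) + Real.log 2 / m with hK
  have hK0 : 0 ≤ K := by positivity
  obtain ⟨y0, hy01, hy0⟩ := exists_y0 B hK0
  set C3 := C2 * (1 / m + 1) with hC3
  have hC30 : 0 < C3 := by positivity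
  set A := 2 ^ g * (4 * K) + 4 * (1 + 2 ^ g) * C3 with hA
  set A' := (2 ^ (2 * κ) + 3 * (g:ℝ)) / (c0 * m) with hA'
  set A'' := 2 * Real.log y0 ^ (g+1) / (c0 * m) with hA''
  have hA0 : 0 < A := by positivity
  have hA'0 : 0 ≤ A' := by positivity
  have hly0 : 0 < Real.log y0 := Real.log_pos hy01
  have hA''0 : 0 ≤ A'' := by positivity
  have hmono : ∀ x : ℝ, 1 ≤ x → m ≤ Real.log (Real.log (3 * x)) := by
    intro x hx
    apply Real.log_le_log
    · exact Real.log_pos (by norm_num)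
    · exact Real.log_le_log (by norm_num) (by linarith)
  refine ⟨A + A' + A'', by positivity, ?_⟩
  intro S y N hy hN hND
  set l := Real.log y with hl
  have hl0 : 0 < l := Real.log_pos hy
  set u := Real.log (Real.log (3 * y)) with hu
  set v := Real.log (Real.log (3 * (S.E : ℝ))) with hv
  have hum : m ≤ u := hmono y hy.le
  have hvm : m ≤ v := hmono _ (by exact_mod_cast S.hE)
  have hKS := KS_lower S
  have hKS0 := KS_pos S
  have hfac : (1:ℝ) ≤ (Nat.factorial g : ℝ) := by exact_mod_cast Nat.one_le_iff_ne_zero.2 (Nat.factorial_ne_zero g)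
  have h2g : (1:ℝ) ≤ 2 ^ g := one_le_pow₀ (by norm_num)
  set M := 2 ^ g * (Nat.factorial g : ℝ) * KS S with hM
  have hMc : c0 ≤ M := by
    rw [hM]
    calc c0 ≤ KS S := hKS
      _ ≤ _ := le_mul_of_one_le_left hKS0.le (one_le_mul_of_one_le_of_one_le h2g hfac)
  have hM0 : 0 < M := by linarith
  -- generic error absorption
  have habs : ∀ Q : ℝ, 0 ≤ Q → Q * y / l ^ (g+1) ≤
      M * (y / l ^ g) * (Q / (c0 * m) * (u + v) / l) := by
    intro Q hQ
    have h1 : Q * (c0 * m) ≤ Q * (M * (u + v)) := by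
      apply mul_le_mul_of_nonneg_left _ hQ
      exact mul_le_mul hMc (by linarith) hm0.le hM0.le
    have h2 : M * (y / l ^ g) * (Q / (c0 * m) * (u + v) / l) =
        (Q * (M * (u + v))) / (c0 * m) * (y / l ^ (g+1)) := by
      rw [pow_succ]; field_simp
    rw [h2]
    have h3 : Q * y / l ^ (g+1) = Q * (c0 * m) / (c0 * m) * (y / l ^ (g+1)) := by
      field_simp
    rw [h3]
    have h4 : 0 ≤ y / l ^ (g+1) := by have : 0 < y := by linarith
                                      positivity
    apply mul_le_mul_of_nonneg_right _ h4
    exact div_le_div_of_nonneg_right h1 (by positivity)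
  have hy00 : 0 < y := by linarith
  have hW : 0 ≤ M * (y / l ^ g) := by positivity
  have huv : 0 ≤ (u + v) / l := by
    have : 0 ≤ u + v := by linarith
    positivity
  have hexp : M * (y / l ^ g) * (1 + (A + A' + A'') * (u + v) / l) =
      M * (y / l ^ g) + M * (y / l ^ g) * (A * (u + v) / l) + M * (y / l ^ g) * (A' * (u + v) / l)
      + M * (y / l ^ g) * (A'' * (u + v) / l) := by ring
  have hp1 : 0 ≤ M * (y / l ^ g) * (A * (u + v) / l) :=
    mul_nonneg hW (by rw [mul_div_assoc]; exact mul_nonneg hA0.le huv)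
  have hp2 : 0 ≤ M * (y / l ^ g) * (A' * (u + v) / l) :=
    mul_nonneg hW (by rw [mul_div_assoc]; exact mul_nonneg hA'0 huv)
  have hp3 : 0 ≤ M * (y / l ^ g) * (A'' * (u + v) / l) :=
    mul_nonneg hW (by rw [mul_div_assoc]; exact mul_nonneg hA''0 huv)
  rw [hexp]
  rcases le_or_gt y0 y with hyy | hyy
  · obtain ⟨hl1, hlB, hKu⟩ := hy0 y hyy
    obtain ⟨D, hD1, hD2, hD3, hD4⟩ := choose_D B hl1 hy hlB
    have hDr : (1:ℝ) ≤ D := by exact_mod_cast hD1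
    have hL : l / 2 - K * u ≤ Real.log D := by
      have h1 : Real.log l ≤ u := by
        apply Real.log_le_log hl0
        exact Real.log_le_log hy00 (by linarith)
      have h2 : Real.log 2 ≤ Real.log 2 / m * u := by
        rw [div_mul_eq_mul_div, le_div_iff₀ hm0]
        exact mul_le_mul_of_nonneg_left hum hlog2.le
      have h3 : (B:ℝ) * Real.log l ≤ B * u := mul_le_mul_of_nonneg_left h1 (by positivity)
      rw [hK, add_mul]
      linarith
    set L := Real.log D with hLdef
    have hLp : 0 < L := by nlinarith
    set Λ := C2 * (1 + v) with hΛ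
    have hv0 : 0 < v := by linarith
    have hu0 : 0 < u := by linarith
    have hΛ0 : 0 ≤ Λ := by positivity
    have hΛ3 : Λ ≤ C3 * v := by
      rw [hΛ, hC3, mul_assoc]
      apply mul_le_mul_of_nonneg_left _ hC2.le
      rw [add_mul, one_mul]
      have : 1 ≤ 1 / m * v := by rw [div_mul_eq_mul_div, le_div_iff₀ hm0]; linarith
      linarith
    have hFD := hF S D hD1
    have hFF := FF_ge_one S hD1
    have hFFp : 0 < FF S D := by linarith
    have hmain : y / FF S D ≤ M * (y / l ^ g) + M * (y / l ^ g) * (A * (u + v) / l) := by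
      have h1 : 1 / FF S D ≤ g.factorial * KS S * ((L + Λ) / L ^ (g+1)) := by
        rw [div_le_iff₀ hFFp]
        have h2 : (g.factorial : ℝ) * KS S * ((L + Λ) / L ^ (g+1)) * FF S D =
          (KS S * FF S D * (L + Λ)) / (L ^ (g+1) / g.factorial) := by field_simp
        rw [h2, one_le_div (by positivity)]
        exact hFD
      have h3 := main_ineq g hl0 hu0.le hK0 hΛ0 hL hKu
      have h4 : (2 ^ g * (4 * K * u) + 4 * (1 + 2 ^ g) * Λ) / l ≤ A * (u + v) / l := by
        apply div_le_div_of_nonneg_right _ hl0.le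
        have h5 : 4 * (1 + 2 ^ g) * Λ ≤ 4 * (1 + 2 ^ g) * (C3 * v) :=
          mul_le_mul_of_nonneg_left hΛ3 (by positivity)
        have h6 : 0 ≤ 2 ^ g * (4 * K) * v := by positivity
        have h7 : 0 ≤ 4 * (1 + 2 ^ g) * C3 * u := by positivity
        have h8 : A * (u + v) = 2 ^ g * (4 * K * u) + 4 * (1 + 2 ^ g) * (C3 * v) +
            2 ^ g * (4 * K) * v + 4 * (1 + 2 ^ g) * C3 * u := by rw [hA]; ring
        rw [h8]
        linarith
      calc y / FF S D = y * (1 / FF S D) := by ring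
        _ ≤ y * (g.factorial * KS S * ((L + Λ) / L ^ (g+1))) := mul_le_mul_of_nonneg_left h1 hy00.le
        _ ≤ y * (g.factorial * KS S * (2 ^ g / l ^ g * (1 + A * (u + v) / l))) := by
            apply mul_le_mul_of_nonneg_left _ hy00.le
            apply mul_le_mul_of_nonneg_left _ (by positivity)
            refine h3.trans ?_
            apply mul_le_mul_of_nonneg_left _ (by positivity)
            linarith
        _ = _ := by rw [hM]; ring
    have herr : (D * (1 + L) ^ κ) ^ 2 + g * (2 * D + 1) ≤ M * (y / l ^ g) * (A' * (u + v) / l) := by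
      refine le_trans ?_ (habs _ (by positivity))
      have h1 : (D * (1 + L) ^ κ) ^ 2 ≤ 2 ^ (2 * κ) * (y / l ^ (g+1)) := by
        calc (D * (1 + L) ^ κ) ^ 2 = (D:ℝ) ^ 2 * (1 + L) ^ (2 * κ) := by
              rw [mul_pow, ← pow_mul, mul_comm κ 2]
          _ ≤ (y / l ^ (2 * B)) * (2 * l) ^ (2 * κ) := by
              apply mul_le_mul hD2 _ (by positivity) (by positivity)
              apply pow_le_pow_left₀ (by positivity)
              linarith
          _ = 2 ^ (2 * κ) * (y / l ^ (2 * g + 2)) := by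
              have : 2 * B = 2 * κ + (2 * g + 2) := by rw [hB]; ring
              rw [this, pow_add, mul_pow]; field_simp
          _ ≤ _ := by
              apply mul_le_mul_of_nonneg_left _ (by positivity)
              apply div_le_div_of_nonneg_left hy00.le (by positivity)
              exact pow_le_pow_right₀ hl1 (by omega)
      have h2 : (g:ℝ) * (2 * D + 1) ≤ 3 * g * (y / l ^ (g+1)) := by
        have h3 : (2 * D + 1 : ℝ) ≤ 3 * (D:ℝ)^2 := by nlinarith
        have h4 : (D:ℝ) ^ 2 ≤ y / l ^ (g+1) := by
          refine hD2.trans ?_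
          apply div_le_div_of_nonneg_left hy00.le (by positivity)
          exact pow_le_pow_right₀ hl1 (by omega)
        have h5 : (g:ℝ) * (2 * D + 1) ≤ g * (3 * (y / l ^ (g+1))) := by
          apply mul_le_mul_of_nonneg_left _ (by positivity)
          linarith
        linarith
      have h6 : (2 ^ (2 * κ) + 3 * (g:ℝ)) * y / l ^ (g+1) =
        2 ^ (2 * κ) * (y / l ^ (g+1)) + 3 * g * (y / l ^ (g+1)) := by ring
      rw [h6]; linarith
    have := hND D hD1
    linarith
  · have hll : l ≤ Real.log y0 := Real.log_le_log hy00 hyy.le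
    have h1 := habs (2 * Real.log y0 ^ (g+1)) (by positivity)
    have h2 : 2 * y ≤ 2 * Real.log y0 ^ (g+1) * y / l ^ (g+1) := by
      rw [le_div_iff₀ (by positivity)]
      have := pow_le_pow_left₀ hl0.le hll (g+1)
      nlinarith
    have h3 : N ≤ M * (y / l ^ g) * (A'' * (u + v) / l) := by
      refine le_trans ?_ h1
      linarith
    linarith

end SieveFinal

attribute [local instance] Classical.propDecidable

/-- The upper-bound sieve estimate of Halberstam–Richert (Theorem 5.7 of "Sieve Methods"). -/
theorem sieve_upper_bound (g : ℕ) :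
    ∃ C : ℝ, 0 < C ∧ ∀ a b : Fin g → ℤ,
      sieveE a b ≠ 0 →
      (∀ p : ℕ, p.Prime → sieveRho a b p < p) →
      ∀ y z : ℝ, 1 < y → y ≤ z →
        (Nat.card {n : ℤ | z - y < (n : ℝ) ∧ (n : ℝ) ≤ z ∧
            ∀ i, Prime (a i * n + b i)} : ℝ) ≤
          2 ^ g * (Nat.factorial g : ℝ) *
          (∏' p : Nat.Primes,
            ((1 - ((sieveRho a b p : ℝ) - 1) / ((p : ℕ) - 1)) *
              (1 - 1 / ((p : ℕ) : ℝ)) ^ (-(g : ℤ) + 1))) *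
          (y / (Real.log y) ^ g) *
          (1 + C * (Real.log (Real.log (3 * y)) +
              Real.log (Real.log (3 * |(sieveE a b : ℝ)|))) / Real.log y) := by
  obtain ⟨C, hC, h⟩ := SieveFinal.final g
  refine ⟨C, hC, ?_⟩
  intro a b hE hρ y z hy _
  have hy0 : 0 < y := by linarith
  have h1 := h (SieveAsm.datOf a b hE hρ) y _ hy (SieveAsm.count_trivial a b (z := z) hy0)
    (fun D hD => SieveAsm.count_le a b hρ hE hy0 hD)
  rw [SieveAsm.tprod_eq a b hρ hE]
  have hEabs : (((SieveAsm.datOf a b hE hρ).E : ℕ) : ℝ) = |(sieveE a b : ℝ)| := by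
    change (((sieveE a b).natAbs : ℕ) : ℝ) = _
    rw [Nat.cast_natAbs, Int.cast_abs]
  rw [hEabs] at h1
  exact h1
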